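/- arXiv:1303.1286 — 8 statements merged into one kernel-verified Lean document; each statement's English description precedes it below -/
import Mathlib

section
/- Let (W,C,F) be a model structure on a finitely bicomplete category M, and let W^G, C^G, F^G be classes of maps of M with W ⊆ W^G, C^G ⊆ C, F^G ⊆ F. Assume: (1) W^G has the two-out-of-three property; (2) W^G, C^G and F^G are closed under retracts; (3) C^G is closed under composition and pushout; (4) for every object X, the map ∅ → X is in C^G if and only if X is cofibrant; (5) every cofibrant object X admits a factorization X ⊔ X → Cyl X → X of the fold map with the first map in C^G and the second in W^G; (6) W is closed under pushout along maps in C^G between cofibrant objects; (7) every commutative square with left vertical map in C^G ∩ W^G and right vertical map in F^G admits a diagonal lift; (8) every map f factors as f = p∘j with j in C^G ∩ W^G and p in F^G. Then (W^G, C^G, F^G) is a model structure on M. -/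
/-!
Every map `f : X ⟶ Y` is factored as a `CG` map followed by a map in `FG ∩ WG`. It suffices to find
a factorization into `CG` followed by `WG`, because the second factor can then be split by `h8`
and two-out-of-three applies (`cof_trivFib_of_cof_weq`).

For cofibrant `X` and `Y` the mapping cylinder does this: it is the pushout of
`X ⨿ X ⟶ Cyl X` along `f ⨿ 𝟙`, so `X ⟶ X ⨿ Y ⟶ Mf` is in `CG`; by pasting, `Y ⟶ Mf` is a pushout
of an end inclusion `X ⟶ Cyl X`, which lies in `CG ∩ WG`, and this class is closed under pushout by
the retract argument (`weq_of_pushout`). Being a section of `Mf ⟶ Y`, it forces `Mf ⟶ Y` into `WG`.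

For general `f`, cover it by a map `QX ⟶ QY` of cofibrant replacements in the given model structure,
split that map as `QX ⟶ Z ⟶ QY`, and push `QX ⟶ Z` out along `QX ⟶ X`. Hypothesis `h6` puts
`Z ⟶ P` in `W ⊆ WG`, and two-out-of-three puts the induced map `P ⟶ Y` in `WG`.

Lifting of `CG` against `p : X ⟶ Y` in `FG ∩ WG` follows from this factorization: push the left map
out to `X ⟶ P` and factor `P ⟶ Y` as `P ⟶ P' ⟶ Y`. Then `X ⟶ P'` is in `CG ∩ WG` by
two-out-of-three, so `h7` provides a retraction `P' ⟶ X` over `Y`.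
-/


open CategoryTheory CategoryTheory.Limits

universe v u v' u'

namespace LLExt

variable {M : Type u} [Category.{v} M]

/-- A class of morphisms has the two-out-of-three property. -/
def TwoOutOfThree (W : MorphismProperty M) : Prop :=
  (∀ ⦃X Y Z : M⦄ (f : X ⟶ Y) (g : Y ⟶ Z), W f → W g → W (f ≫ g)) ∧
  (∀ ⦃X Y Z : M⦄ (f : X ⟶ Y) (g : Y ⟶ Z), W f → W (f ≫ g) → W g) ∧
  (∀ ⦃X Y Z : M⦄ (f : X ⟶ Y) (g : Y ⟶ Z), W g → W (f ≫ g) → W f)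

/-- A class of morphisms is closed under retracts: if `f` is a retract of `g`
(in the arrow category) and `K g`, then `K f`. -/
def ClosedUnderRetracts (K : MorphismProperty M) : Prop :=
  ∀ ⦃A B A' B' : M⦄ (f : A ⟶ B) (g : A' ⟶ B') (i : A ⟶ A') (r : A' ⟶ A)
    (i' : B ⟶ B') (r' : B' ⟶ B),
    i ≫ r = 𝟙 A → i' ≫ r' = 𝟙 B → f ≫ i' = i ≫ g → g ≫ r' = r ≫ f → K g → K f

/-- A class of morphisms is closed under composition. -/
def ClosedUnderComposition (K : MorphismProperty M) : Prop :=
  ∀ ⦃X Y Z : M⦄ (f : X ⟶ Y) (g : Y ⟶ Z), K f → K g → K (f ≫ g)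

/-- A class of morphisms is closed under pushout (cobase change). -/
def ClosedUnderPushouts (K : MorphismProperty M) : Prop :=
  ∀ ⦃Z X Y P : M⦄ (f : Z ⟶ X) (g : Z ⟶ Y) (inl : X ⟶ P) (inr : Y ⟶ P),
    IsPushout f g inl inr → K f → K inr

/-- A class of morphisms is closed under pullback (base change). -/
def ClosedUnderPullbacks (K : MorphismProperty M) : Prop :=
  ∀ ⦃P X Y Z : M⦄ (fst : P ⟶ X) (snd : P ⟶ Y) (f : X ⟶ Z) (g : Y ⟶ Z),
    IsPullback fst snd f g → K f → K snd

/-- Left properness: the pushout of a map in `W` along a map in `C` is in `W`. -/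
def LeftProper (W C : MorphismProperty M) : Prop :=
  ∀ ⦃A X B P : M⦄ (f : A ⟶ X) (i : A ⟶ B) (inl : X ⟶ P) (inr : B ⟶ P),
    IsPushout f i inl inr → W f → C i → W inr

/-- Right properness: the pullback of a map in `W` along a map in `F` is in `W`. -/
def RightProper (W F : MorphismProperty M) : Prop :=
  ∀ ⦃P X Y Z : M⦄ (fst : P ⟶ X) (snd : P ⟶ Y) (f : X ⟶ Z) (g : Y ⟶ Z),
    IsPullback fst snd f g → W f → F g → W snd

/-- A (Quillen) model structure on a category, given by classes `W` (weak
equivalences), `C` (cofibrations) and `F` (fibrations). -/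
structure IsModelStructure (W C F : MorphismProperty M) : Prop where
  weq_twoOutOfThree : TwoOutOfThree W
  weq_retracts : ClosedUnderRetracts W
  cof_retracts : ClosedUnderRetracts C
  fib_retracts : ClosedUnderRetracts F
  lift_trivCof_fib : ∀ ⦃A B X Y : M⦄ (i : A ⟶ B) (p : X ⟶ Y),
    C i → W i → F p → HasLiftingProperty i p
  lift_cof_trivFib : ∀ ⦃A B X Y : M⦄ (i : A ⟶ B) (p : X ⟶ Y),
    C i → F p → W p → HasLiftingProperty i p
  fact_cof_trivFib : ∀ ⦃X Y : M⦄ (f : X ⟶ Y),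
    ∃ (Z : M) (i : X ⟶ Z) (p : Z ⟶ Y), C i ∧ F p ∧ W p ∧ i ≫ p = f
  fact_trivCof_fib : ∀ ⦃X Y : M⦄ (f : X ⟶ Y),
    ∃ (Z : M) (i : X ⟶ Z) (p : Z ⟶ Y), C i ∧ W i ∧ F p ∧ i ≫ p = f

/-- Identities are weak equivalences in a model structure. Factoring `𝟙 X` through a weak
equivalence `X ⟶ Z` makes `X` a retract of `Z`, and `𝟙 Z` is a weak equivalence by
two-out-of-three. -/
theorem IsModelStructure.weq_id {W C F : MorphismProperty M} (h : IsModelStructure W C F)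
    (X : M) : W (𝟙 X) := by
  obtain ⟨Z, i, p, -, hi, -, hip⟩ := h.fact_trivCof_fib (𝟙 X)
  have hZ : W (𝟙 Z) := h.weq_twoOutOfThree.2.1 i (𝟙 Z) hi (by simpa using hi)
  exact h.weq_retracts (𝟙 X) (𝟙 Z) i p i p hip hip (by simp) (by simp) hZ

/-- If every map factors as `CG ∩ WG` followed by `FG`, with `CG ∩ WG` lifting against `FG`, then
every pushout of a map in `CG ∩ WG` is in `WG`. -/
theorem weq_of_pushout {WG CG FG : MorphismProperty M}
    (h2W : ClosedUnderRetracts WG)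
    (h7 : ∀ ⦃A B X Y : M⦄ (j : A ⟶ B) (p : X ⟶ Y),
      CG j → WG j → FG p → HasLiftingProperty j p)
    (h8 : ∀ ⦃X Y : M⦄ (f : X ⟶ Y),
      ∃ (Z : M) (j : X ⟶ Z) (p : Z ⟶ Y), CG j ∧ WG j ∧ FG p ∧ j ≫ p = f)
    {Z X Y P : M} {f : Z ⟶ X} {g : Z ⟶ Y} {inl : X ⟶ P} {inr : Y ⟶ P}
    (sq : IsPushout f g inl inr) (hC : CG f) (hW : WG f) : WG inr := by
  obtain ⟨T, j, p, -, hjW, hp, hjp⟩ := h8 inr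
  have := h7 f p hC hW hp
  have w : (g ≫ j) ≫ p = f ≫ inl := by rw [Category.assoc, hjp, sq.w]
  have cs : CommSq (g ≫ j) f p inl := ⟨w⟩
  -- a section `P ⟶ T` of `p` under `Y` exhibits `inr` as a retract of `j`
  let s : P ⟶ T := sq.desc cs.lift j cs.fac_left
  have hs : inr ≫ s = j := sq.inr_desc _ _ _
  have hsp : s ≫ p = 𝟙 P := by
    apply sq.hom_ext
    · simp [s, cs.fac_right]
    · simp [s, hjp]
  exact h2W inr j (𝟙 Y) (𝟙 Y) s p (by simp) hsp (by simp [hs]) (by simp [hjp]) hjW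

/-- A factorization into `CG` followed by `WG` improves to one into `CG` followed by `FG ∩ WG`. -/
theorem cof_trivFib_of_cof_weq {WG CG FG : MorphismProperty M}
    (h1 : TwoOutOfThree WG) (h3comp : ClosedUnderComposition CG)
    (h8 : ∀ ⦃X Y : M⦄ (f : X ⟶ Y),
      ∃ (Z : M) (j : X ⟶ Z) (p : Z ⟶ Y), CG j ∧ WG j ∧ FG p ∧ j ≫ p = f)
    {X T Y : M} (i : X ⟶ T) (q : T ⟶ Y) (hi : CG i) (hq : WG q) :
    ∃ (Z : M) (k : X ⟶ Z) (p : Z ⟶ Y), CG k ∧ FG p ∧ WG p ∧ k ≫ p = i ≫ q := by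
  obtain ⟨Z, j, p, hj, hjW, hp, rfl⟩ := h8 q
  exact ⟨Z, i ≫ j, p, h3comp _ _ hi hj, hp, h1.2.1 _ _ hjW hq, by simp⟩

/-- The mapping cylinder factorization of a map between `CG`-cofibrant objects. -/
theorem mapping_cylinder [HasFiniteColimits M] {WG CG : MorphismProperty M}
    (h1 : TwoOutOfThree WG) (hid : ∀ X : M, WG (𝟙 X))
    (h3comp : ClosedUnderComposition CG) (h3push : ClosedUnderPushouts CG)
    (hpush : ∀ ⦃Z X Y P : M⦄ (f : Z ⟶ X) (g : Z ⟶ Y) (inl : X ⟶ P) (inr : Y ⟶ P),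
      IsPushout f g inl inr → CG f → WG f → WG inr)
    {X Y : M} (f : X ⟶ Y) (hX : CG (initial.to X)) (hY : CG (initial.to Y))
    (hcyl : ∃ (Cyl : M) (i : X ⨿ X ⟶ Cyl) (p : Cyl ⟶ X), CG i ∧ WG p ∧ i ≫ p = codiag X) :
    ∃ (T : M) (i : X ⟶ T) (q : T ⟶ Y), CG i ∧ WG q ∧ i ≫ q = f := by
  obtain ⟨Cyl, i, p, hi, hp, hip⟩ := hcyl
  have sq := IsPushout.of_hasPushout (coprod.map f (𝟙 X)) i
  have hXX : CG (coprod.inl : X ⟶ X ⨿ X) :=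
    h3push _ _ _ _ (IsPushout.of_hasBinaryCoproduct' X X).flip hX
  have hXY : CG (coprod.inr : X ⟶ Y ⨿ X) :=
    h3push _ _ _ _ (IsPushout.of_hasBinaryCoproduct' Y X) hY
  have hend : WG ((coprod.inl : X ⟶ X ⨿ X) ≫ i) := by
    refine h1.2.2 _ p hp ?_
    have h : (coprod.inl ≫ i) ≫ p = 𝟙 X := by rw [Category.assoc, hip, codiag, coprod.inl_desc]
    rw [h]
    exact hid X
  have sq' := (IsPushout.of_coprod_inl_with_id f X).paste_horiz sq.flip
  have hY' := hpush _ _ _ _ sq' (h3comp _ _ hXX hi) hend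
  have w : coprod.map f (𝟙 X) ≫ coprod.desc (𝟙 Y) f = i ≫ p ≫ f := by
    rw [← Category.assoc, hip]
    ext <;> simp
  refine ⟨_, coprod.inr ≫ pushout.inl _ _, sq.desc (coprod.desc (𝟙 Y) f) (p ≫ f) w,
    h3comp _ _ hXY (h3push _ _ _ _ sq.flip hi), h1.2.1 _ _ hY' ?_, ?_⟩
  · rw [Category.assoc, sq.inl_desc, coprod.inl_desc]
    exact hid Y
  · rw [Category.assoc, sq.inl_desc, coprod.inr_desc]

/-- Theorem 1.2 (after Bousfield): existence of ℓℓ-extensions. -/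
theorem theorem_1_2
    [HasFiniteLimits M] [HasFiniteColimits M]
    (W C F WG CG FG : MorphismProperty M)
    (hMS : IsModelStructure W C F)
    (hWsub : ∀ ⦃X Y : M⦄ (f : X ⟶ Y), W f → WG f)
    (hCsub : ∀ ⦃X Y : M⦄ (f : X ⟶ Y), CG f → C f)
    (hFsub : ∀ ⦃X Y : M⦄ (f : X ⟶ Y), FG f → F f)
    (h1 : TwoOutOfThree WG)
    (h2W : ClosedUnderRetracts WG)
    (h2C : ClosedUnderRetracts CG)
    (h2F : ClosedUnderRetracts FG)
    (h3comp : ClosedUnderComposition CG)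
    (h3push : ClosedUnderPushouts CG)
    (h4 : ∀ X : M, CG (initial.to X) ↔ C (initial.to X))
    (h5 : ∀ X : M, C (initial.to X) →
      ∃ (Cyl : M) (i : X ⨿ X ⟶ Cyl) (p : Cyl ⟶ X), CG i ∧ WG p ∧ i ≫ p = codiag X)
    (h6 : ∀ ⦃A X B P : M⦄ (f : A ⟶ X) (j : A ⟶ B) (inl : X ⟶ P) (inr : B ⟶ P),
      IsPushout f j inl inr → W f → CG j →
      C (initial.to A) → C (initial.to B) → W inr)
    (h7 : ∀ ⦃A B X Y : M⦄ (j : A ⟶ B) (p : X ⟶ Y),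
      CG j → WG j → FG p → HasLiftingProperty j p)
    (h8 : ∀ ⦃X Y : M⦄ (f : X ⟶ Y),
      ∃ (Z : M) (j : X ⟶ Z) (p : Z ⟶ Y), CG j ∧ WG j ∧ FG p ∧ j ≫ p = f) :
    IsModelStructure WG CG FG := by
  have hid : ∀ X : M, WG (𝟙 X) := fun X => hWsub _ (hMS.weq_id X)
  have fact : ∀ ⦃X Y : M⦄ (f : X ⟶ Y),
      ∃ (Z : M) (i : X ⟶ Z) (p : Z ⟶ Y), CG i ∧ FG p ∧ WG p ∧ i ≫ p = f := by
    intro X Y f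
    obtain ⟨QX, iX, pX, hiX, hFX, hWX, hX⟩ := hMS.fact_cof_trivFib (initial.to X)
    obtain ⟨QY, iY, pY, hiY, hFY, hWY, hY⟩ := hMS.fact_cof_trivFib (initial.to Y)
    obtain rfl : iX = initial.to QX := Subsingleton.elim _ _
    obtain rfl : iY = initial.to QY := Subsingleton.elim _ _
    have := hMS.lift_cof_trivFib (initial.to QX) pY hiX hFY hWY
    have cs : CommSq (initial.to QY) (initial.to QX) pY (pX ≫ f) := ⟨Subsingleton.elim _ _⟩
    obtain ⟨Z, j, q, hj, hq, hjq⟩ := mapping_cylinder h1 hid h3comp h3push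
      (fun _ _ _ _ _ _ _ _ sq hC hW => weq_of_pushout h2W h7 h8 sq hC hW)
      cs.lift ((h4 _).2 hiX) ((h4 _).2 hiY) (h5 QX hiX)
    have hZ : C (initial.to Z) := by
      rw [← h4, Subsingleton.elim (initial.to Z) (initial.to QX ≫ j)]
      exact h3comp _ _ ((h4 _).2 hiX) hj
    have sq := IsPushout.of_hasPushout pX j
    have hw : pX ≫ f = j ≫ q ≫ pY := by rw [← Category.assoc, hjq, cs.fac_right]
    have hinr := hWsub _ (h6 _ _ _ _ sq hWX hj hiX hZ)
    have hdesc : WG (sq.desc f (q ≫ pY) hw) := by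
      refine h1.2.1 _ _ hinr ?_
      rw [sq.inr_desc]
      exact h1.1 _ _ hq (hWsub _ hWY)
    have := cof_trivFib_of_cof_weq h1 h3comp h8 _ _ (h3push _ _ _ _ sq.flip hj) hdesc
    rwa [sq.inl_desc] at this
  refine ⟨h1, h2W, h2C, h2F, h7, ?_, fact, h8⟩
  intro A B X Y i p hi hpF hpW
  refine ⟨fun {u v} cs => ?_⟩
  have sq := IsPushout.of_hasPushout i u
  obtain ⟨P', k, q, hk, -, hqW, hkq⟩ := fact (sq.desc v p cs.w.symm)
  have hXP : CG (pushout.inr i u ≫ k) := h3comp _ _ (h3push _ _ _ _ sq hi) hk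
  have hcomp : (pushout.inr i u ≫ k) ≫ q = p := by
    rw [Category.assoc, hkq, sq.inr_desc]
  have hXPW : WG (pushout.inr i u ≫ k) := h1.2.2 _ q hqW (by rwa [hcomp])
  have := h7 _ p hXP hXPW hpF
  have cs' : CommSq (𝟙 X) (pushout.inr i u ≫ k) p q := ⟨by rw [hcomp, Category.id_comp]⟩
  refine ⟨⟨⟨pushout.inl i u ≫ k ≫ cs'.lift, ?_, ?_⟩⟩⟩
  · have h := cs'.fac_left
    rw [Category.assoc] at h
    rw [← Category.assoc, sq.w, Category.assoc, h, Category.comp_id]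
  · rw [Category.assoc, Category.assoc, cs'.fac_right, hkq, sq.inl_desc]

end LLExt
end

section
/- Let (W,C,F) be a model structure on a finitely bicomplete category M, and let W^G, C^G, F^G be classes of maps of M with W ⊆ W^G, C^G ⊆ C, F^G ⊆ F satisfying assumptions (1)–(8) of the ℓℓ-extension existence theorem: (1) W^G has two-out-of-three; (2) W^G, C^G, F^G closed under retracts; (3) C^G closed under composition and pushout; (4) ∅ → X is in C^G iff X is cofibrant; (5) every cofibrant X admits a factorization X ⊔ X → Cyl X → X of the fold map with first map in C^G and second in W^G; (6) W is closed under pushout along maps in C^G between cofibrant objects; (7) maps in C^G ∩ W^G have the left lifting property with respect to maps in F^G; (8) every map factors as a map in C^G ∩ W^G followed by a map in F^G. Then every map g : X → Y between cofibrant objects of M factors as g = p∘i with i in C^G and p in W^G. -/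
/-!
The factorization is the mapping cylinder `Z = Cyl X ⊔_X Y`, realised as the pushout of the
cylinder inclusion `i : X ⨿ X ⟶ Cyl X` along `coprod.map g (𝟙 X) : X ⨿ X ⟶ Y ⨿ X`.

* The map `X ⟶ Y ⨿ X ⟶ Z` lies in `CG`: its first factor is a cobase change of `∅ ⟶ Y`, and
  its second factor is a cobase change of `i`.
* The map `Y ⟶ Y ⨿ X ⟶ Z` is, by pasting, a cobase change of the end inclusion `X ⟶ Cyl X`,
  which lies in `CG ∩ WG`. The retract argument (`retract_argument`) identifies `CG ∩ WG` with the
  maps having the left lifting property against `FG`, so `CG ∩ WG` is closed under cobase change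
  and `Y ⟶ Z` lies in `WG`. This map is a section of the projection `Z ⟶ Y`, which is therefore in
  `WG` by two-out-of-three.
-/

open CategoryTheory CategoryTheory.Limits

universe v u v' u'

namespace LLExt

variable {M : Type u} [Category.{v} M]

/-- The retract argument: a map with the left lifting property against `F` is a retract of the
left factor of any factorization of it as a map in `C ∩ W` followed by a map in `F`. -/
lemma retract_argument {W C F : MorphismProperty M}
    (hW : ClosedUnderRetracts W) (hC : ClosedUnderRetracts C)
    (hfact : ∀ ⦃X Y : M⦄ (f : X ⟶ Y),
      ∃ (Z : M) (j : X ⟶ Z) (p : Z ⟶ Y), C j ∧ W j ∧ F p ∧ j ≫ p = f)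
    {A B : M} (f : A ⟶ B)
    (hf : ∀ ⦃X Y : M⦄ (p : X ⟶ Y), F p → HasLiftingProperty f p) : C f ∧ W f := by
  obtain ⟨Z, j, p, hCj, hWj, hp, hjp⟩ := hfact f
  have := hf p hp
  have sq : CommSq j f p (𝟙 B) := ⟨by simp [hjp]⟩
  have h1 : f ≫ sq.lift = 𝟙 A ≫ j := by simp
  have h2 : j ≫ p = 𝟙 A ≫ f := by simp [hjp]
  exact ⟨hC f j (𝟙 A) (𝟙 A) sq.lift p (by simp) sq.fac_right h1 h2 hCj,
    hW f j (𝟙 A) (𝟙 A) sq.lift p (by simp) sq.fac_right h1 h2 hWj⟩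

/-- Mapping cylinder factorization of a map between cofibrant objects,
under the hypotheses of Theorem 1.2. -/
theorem mapping_cylinder_factorization
    [HasFiniteLimits M] [HasFiniteColimits M]
    (W C F WG CG FG : MorphismProperty M)
    (hMS : IsModelStructure W C F)
    (hWsub : ∀ ⦃X Y : M⦄ (f : X ⟶ Y), W f → WG f)
    (hCsub : ∀ ⦃X Y : M⦄ (f : X ⟶ Y), CG f → C f)
    (hFsub : ∀ ⦃X Y : M⦄ (f : X ⟶ Y), FG f → F f)
    (h1 : TwoOutOfThree WG)
    (h2W : ClosedUnderRetracts WG)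
    (h2C : ClosedUnderRetracts CG)
    (h2F : ClosedUnderRetracts FG)
    (h3comp : ClosedUnderComposition CG)
    (h3push : ClosedUnderPushouts CG)
    (h4 : ∀ X : M, CG (initial.to X) ↔ C (initial.to X))
    (h5 : ∀ X : M, C (initial.to X) →
      ∃ (Cyl : M) (i : X ⨿ X ⟶ Cyl) (p : Cyl ⟶ X), CG i ∧ WG p ∧ i ≫ p = codiag X)
    (h6 : ∀ ⦃A X B P : M⦄ (f : A ⟶ X) (j : A ⟶ B) (inl : X ⟶ P) (inr : B ⟶ P),
      IsPushout f j inl inr → W f → CG j →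
      C (initial.to A) → C (initial.to B) → W inr)
    (h7 : ∀ ⦃A B X Y : M⦄ (j : A ⟶ B) (p : X ⟶ Y),
      CG j → WG j → FG p → HasLiftingProperty j p)
    (h8 : ∀ ⦃X Y : M⦄ (f : X ⟶ Y),
      ∃ (Z : M) (j : X ⟶ Z) (p : Z ⟶ Y), CG j ∧ WG j ∧ FG p ∧ j ≫ p = f) :
    ∀ ⦃X Y : M⦄ (g : X ⟶ Y), C (initial.to X) → C (initial.to Y) →
      ∃ (Z : M) (i : X ⟶ Z) (p : Z ⟶ Y), CG i ∧ WG p ∧ i ≫ p = g := by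
  intro X Y g hX hY
  obtain ⟨Cyl, i, q, hi, hq, hiq⟩ := h5 X hX
  -- Identities lie in `WG` by cancelling against any map in `WG`.
  have hid : ∀ A : M, WG (𝟙 A) := fun A => by
    obtain ⟨Z, j, -, -, hj, -, -⟩ := h8 (𝟙 A)
    exact h1.2.2 (𝟙 A) j hj (by simpa using hj)
  have hinit : ∀ A B : M, IsPushout (initial.to A) (initial.to B)
      (coprod.inl : A ⟶ A ⨿ B) coprod.inr := fun A B =>
    IsPushout.of_hasBinaryCoproduct' A B
  have hinr : ∀ A B : M, C (initial.to A) → CG (coprod.inr : B ⟶ A ⨿ B) := fun A B hA =>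
    h3push _ _ _ _ (hinit A B) ((h4 A).2 hA)
  have hinl : CG (coprod.inl : X ⟶ X ⨿ X) :=
    h3push _ _ _ _ (hinit X X).flip ((h4 X).2 hX)
  -- The end inclusion `X ⟶ Cyl` is a section of `q`.
  have hsC : CG (coprod.inl ≫ i) := h3comp _ _ hinl hi
  have hsW : WG (coprod.inl ≫ i) := by
    refine h1.2.2 _ q hq ?_
    rw [Category.assoc, hiq, coprod.inl_desc]
    exact hid X
  have hpo := IsPushout.of_hasPushout i (coprod.map g (𝟙 X))
  have hpaste : IsPushout (coprod.inl ≫ i) g (pushout.inl i (coprod.map g (𝟙 X)))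
      (coprod.inl ≫ pushout.inr i (coprod.map g (𝟙 X))) :=
    (IsPushout.of_coprod_inl_with_id g X).paste_horiz hpo
  have hYZ : WG (coprod.inl ≫ pushout.inr i (coprod.map g (𝟙 X))) := by
    refine (retract_argument h2W h2C h8 _ fun A B p hp => ?_).2
    have := h7 _ p hsC hsW hp
    exact hpaste.flip.hasLiftingProperty p
  have hw : i ≫ (q ≫ g) = coprod.map g (𝟙 X) ≫ coprod.desc (𝟙 Y) g := by
    rw [← Category.assoc, hiq]
    ext <;> simp
  refine ⟨_, coprod.inr ≫ pushout.inr i (coprod.map g (𝟙 X)), pushout.desc _ _ hw, ?_, ?_, ?_⟩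
  · exact h3comp _ _ (hinr Y X hY) (h3push _ _ _ _ hpo hi)
  · refine h1.2.1 _ _ hYZ ?_
    rw [Category.assoc, pushout.inr_desc, coprod.inl_desc]
    exact hid Y
  · rw [Category.assoc, pushout.inr_desc, coprod.inr_desc]

end LLExt
end

section
/- Let (W,C,F) be a model structure on a finitely bicomplete category M, and let W^G, C^G, F^G be classes of maps of M with W ⊆ W^G, C^G ⊆ C, F^G ⊆ F satisfying assumptions (1)–(8) of the ℓℓ-extension existence theorem: (1) W^G has two-out-of-three; (2) W^G, C^G, F^G closed under retracts; (3) C^G closed under composition and pushout; (4) ∅ → X is in C^G iff X is cofibrant; (5) every cofibrant X admits a factorization X ⊔ X → Cyl X → X of the fold map with first map in C^G and second in W^G; (6) W is closed under pushout along maps in C^G between cofibrant objects; (7) maps in C^G ∩ W^G have the left lifting property with respect to maps in F^G; (8) every map factors as a map in C^G ∩ W^G followed by a map in F^G. Then the resulting model structure (W^G, C^G, F^G) is left proper: for every pushout square in M of a map f in W^G along a map i in C^G, the pushout of f is again in W^G. -/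
/-!
The heart of the proof is a form of Ken Brown's lemma under a fixed object
(`LLData.cobase_weq`): for any `f : A ⟶ X`, cobase change along `f` sends a `WG`-map between
objects whose structure map from `A` lies in `CG` to a `WG`-map. It needs two facts.

* `CG ∩ WG` is closed under pushout, by the retract argument against `FG`.
* Every map factors as a `CG`-map followed by a `WG`-map. Between cofibrant objects this is the
  mapping cylinder. In general, replace source and target by `W`-equivalent cofibrant objects,
  factor there, and push the `CG`-part forward; the hypothesis on pushouts of `W` along
  `CG`-maps between cofibrant objects shows that the comparison maps stay in `W`.

The mapping cylinder factors a `WG`-map between cofibrant objects as a map in `CG ∩ WG` followed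
by a retraction `r` of a map `s` in `CG ∩ WG`. For such an `r` and `j : E ⟶ B` in `CG`, the map
from `B` to its cobase change along `r` is the cobase change along `r` of the counit
`E ⨿_X B ⟶ B`, so Ken Brown's lemma applies; this gives left properness for cofibrant objects.

For a general `CG`-map `i : A ⟶ B`, the factorization above yields a `WG`-map `Q ⟶ B` under `A`,
where `A ⟶ Q` is a pushout of a `CG`-map between cofibrant objects along a `W`-map. For `A ⟶ Q`
properness reduces to the cofibrant case, and Ken Brown's lemma transfers it from `Q` to `B`.
No lifting of `CG`-maps against `FG ∩ WG` is used.
-/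

open CategoryTheory CategoryTheory.Limits

universe v u v' u'

namespace LLExt

variable {M : Type u} [Category.{v} M]

/-- The hypotheses on an extension `(WG, CG, FG)` of a model structure that left properness
depends on. Of the original model structure only `cofReplace` is kept: every `X` has a cofibrant
`W`-replacement `p : X' ⟶ X` along which maps out of cofibrant objects lift. -/
structure LLData [HasFiniteColimits M] (W C WG CG FG : MorphismProperty M) : Prop where
  sub : ∀ ⦃X Y : M⦄ (f : X ⟶ Y), W f → WG f
  cofSub : ∀ ⦃X Y : M⦄ (f : X ⟶ Y), CG f → C f
  two : TwoOutOfThree WG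
  retr : ClosedUnderRetracts WG
  comp : ClosedUnderComposition CG
  push : ClosedUnderPushouts CG
  cof : ∀ X : M, CG (initial.to X) ↔ C (initial.to X)
  cyl : ∀ X : M, C (initial.to X) →
      ∃ (Cyl : M) (i : X ⨿ X ⟶ Cyl) (p : Cyl ⟶ X), CG i ∧ WG p ∧ i ≫ p = codiag X
  pushW : ∀ ⦃A X B P : M⦄ (f : A ⟶ X) (j : A ⟶ B) (inl : X ⟶ P) (inr : B ⟶ P),
      IsPushout f j inl inr → W f → CG j →
      C (initial.to A) → C (initial.to B) → W inr
  lift : ∀ ⦃A B X Y : M⦄ (j : A ⟶ B) (p : X ⟶ Y),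
      CG j → WG j → FG p → HasLiftingProperty j p
  fact : ∀ ⦃X Y : M⦄ (f : X ⟶ Y),
      ∃ (Z : M) (j : X ⟶ Z) (p : Z ⟶ Y), CG j ∧ WG j ∧ FG p ∧ j ≫ p = f
  cofReplace : ∀ X : M, ∃ (X' : M) (p : X' ⟶ X), C (initial.to X') ∧ W p ∧
      ∀ ⦃A : M⦄ (g : A ⟶ X), C (initial.to A) → ∃ g' : A ⟶ X', g' ≫ p = g

namespace LLData

variable [HasFiniteColimits M] {W C WG CG FG : MorphismProperty M}

lemma weq_id (h : LLData W C WG CG FG) (X : M) : WG (𝟙 X) := by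
  obtain ⟨Z, j, p, -, hj, -, -⟩ := h.fact (𝟙 X)
  exact h.two.2.2 (𝟙 X) j hj (by simpa using hj)

/-- Pushouts of maps in `CG ∩ WG` are in `WG`: such a pushout lifts against `FG`, so it is a
retract of the first part of its `(CG ∩ WG, FG)`-factorization. -/
lemma push_triv (h : LLData W C WG CG FG) {Z X Y P : M} {f : Z ⟶ X} {g : Z ⟶ Y}
    {inl : X ⟶ P} {inr : Y ⟶ P} (sq : IsPushout f g inl inr) (hf : CG f) (hw : WG f) :
    WG inr := by
  obtain ⟨T, k, q, -, hk, hq, e⟩ := h.fact inr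
  have := h.lift f q hf hw hq
  have := sq.flip.hasLiftingProperty q
  have cs : CommSq k inr q (𝟙 P) := ⟨by simp [e]⟩
  exact h.retr inr k (𝟙 Y) (𝟙 Y) cs.lift q (by simp) cs.fac_right (by simp) (by simp [e]) hk

lemma cofibrant_of (h : LLData W C WG CG FG) {X Y : M} (f : X ⟶ Y) (hX : C (initial.to X))
    (hf : CG f) : C (initial.to Y) := by
  have e : initial.to X ≫ f = initial.to Y := Subsingleton.elim _ _
  exact e ▸ h.cofSub _ (h.comp _ _ ((h.cof X).2 hX) hf)

/-- The mapping cylinder factorization `X ⟶ E ⟶ Y` of a map between cofibrant objects; the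
second map retracts a map `s` in `CG ∩ WG`. -/
lemma mappingCylinder (h : LLData W C WG CG FG) {X Y : M} (f : X ⟶ Y)
    (hX : C (initial.to X)) (hY : C (initial.to Y)) :
    ∃ (E : M) (k : X ⟶ E) (r : E ⟶ Y) (s : Y ⟶ E),
      CG k ∧ CG s ∧ WG s ∧ WG r ∧ k ≫ r = f ∧ s ≫ r = 𝟙 Y := by
  obtain ⟨Cyl, i, p, hi, hp, e⟩ := h.cyl X hX
  have hinl : CG (coprod.inl : X ⟶ X ⨿ X) :=
    h.push _ _ _ _ (IsPushout.of_hasBinaryCoproduct' X X).flip ((h.cof X).2 hX)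
  have hinr : CG (coprod.inr : X ⟶ Y ⨿ X) :=
    h.push _ _ _ _ (IsPushout.of_hasBinaryCoproduct' Y X) ((h.cof Y).2 hY)
  have e0 : coprod.inl ≫ i ≫ p = 𝟙 X := by rw [e]; exact coprod.inl_desc _ _
  have e1 : coprod.inr ≫ i ≫ p = 𝟙 X := by rw [e]; exact coprod.inr_desc _ _
  have hw : WG (coprod.inl ≫ i) :=
    h.two.2.2 _ p hp (by rw [Category.assoc, e0]; exact h.weq_id X)
  -- `E` is the pushout of `Cyl` along `f ⨿ 𝟙`; it is also the pushout of one end of `Cyl` along `f`.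
  have sq := IsPushout.of_hasPushout i (coprod.map f (𝟙 X))
  have sq' := (IsPushout.of_coprod_inl_with_id f X).paste_horiz sq
  have hs : WG (coprod.inl ≫ pushout.inr i (coprod.map f (𝟙 X))) :=
    h.push_triv sq' (h.comp _ _ hinl hi) hw
  have hsc : CG (coprod.inl ≫ pushout.inr i (coprod.map f (𝟙 X))) :=
    h.push _ _ _ _ sq' (h.comp _ _ hinl hi)
  have w : i ≫ p ≫ f = coprod.map f (𝟙 X) ≫ coprod.desc (𝟙 Y) f := by
    apply coprod.hom_ext
    · rw [← Category.assoc i, ← Category.assoc, e0, ← Category.assoc, coprod.inl_map,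
        Category.assoc, coprod.inl_desc, Category.id_comp, Category.comp_id]
    · rw [← Category.assoc i, ← Category.assoc, e1, ← Category.assoc, coprod.inr_map,
        Category.assoc, coprod.inr_desc, Category.id_comp]
  have er : (coprod.inl ≫ pushout.inr i (coprod.map f (𝟙 X))) ≫
      sq.desc (p ≫ f) (coprod.desc (𝟙 Y) f) w = 𝟙 Y := by
    rw [Category.assoc, sq.inr_desc, coprod.inl_desc]
  refine ⟨_, coprod.inr ≫ pushout.inr i (coprod.map f (𝟙 X)),
    sq.desc (p ≫ f) (coprod.desc (𝟙 Y) f) w,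
    coprod.inl ≫ pushout.inr i (coprod.map f (𝟙 X)),
    h.comp _ _ hinr (h.push _ _ _ _ sq hi), hsc, hs, ?_, ?_, er⟩
  · exact h.two.2.1 _ _ hs (by rw [er]; exact h.weq_id Y)
  · rw [Category.assoc, sq.inr_desc, coprod.inr_desc]

/-- Every map factors as a `CG`-map `k` followed by a `WG`-map, where `k` is the pushout of a
`CG`-map between cofibrant objects along a `W`-map. -/
lemma factor (h : LLData W C WG CG FG) {X Y : M} (f : X ⟶ Y) :
    ∃ (X' Z' Q : M) (a : X' ⟶ X) (j : X' ⟶ Z') (k : X ⟶ Q) (b : Z' ⟶ Q) (q : Q ⟶ Y),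
      IsPushout a j k b ∧ C (initial.to X') ∧ W a ∧ CG j ∧ W b ∧ WG q ∧ k ≫ q = f := by
  obtain ⟨X', a, hX', ha, -⟩ := h.cofReplace X
  obtain ⟨Y', y, hY', hy, ly⟩ := h.cofReplace Y
  obtain ⟨f', hf'⟩ := ly (a ≫ f) hX'
  obtain ⟨Z', j, r, -, hj, -, -, hr, e, -⟩ := h.mappingCylinder f' hX' hY'
  have sq := IsPushout.of_hasPushout a j
  have hb : W (pushout.inr a j) := h.pushW _ _ _ _ sq ha hj hX' (h.cofibrant_of j hX' hj)
  have w : a ≫ f = j ≫ r ≫ y := by rw [← Category.assoc, e, hf']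
  refine ⟨X', Z', _, a, j, _, _, sq.desc f (r ≫ y) w, sq, hX', ha, hj, hb, ?_, by simp⟩
  refine h.two.2.1 (pushout.inr a j) _ (h.sub _ hb) ?_
  rw [sq.inr_desc]
  exact h.two.1 _ _ hr (h.sub _ hy)

/-- Ken Brown's lemma under `A`: cobase change along an arbitrary `f : A ⟶ X` preserves
`WG`-maps between objects whose structure maps from `A` are in `CG`. -/
lemma cobase_weq (h : LLData W C WG CG FG) {A X D B P₁ P₂ : M} {f : A ⟶ X}
    {i₁ : A ⟶ D} {i₂ : A ⟶ B} {l₁ : X ⟶ P₁} {r₁ : D ⟶ P₁} {l₂ : X ⟶ P₂} {r₂ : B ⟶ P₂}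
    (sq₁ : IsPushout f i₁ l₁ r₁) (sq₂ : IsPushout f i₂ l₂ r₂) (h₁ : CG i₁) (h₂ : CG i₂)
    (c : D ⟶ B) (hc : WG c) (ec : i₁ ≫ c = i₂) (d : P₁ ⟶ P₂) (el : l₁ ≫ d = l₂)
    (er : r₁ ≫ d = c ≫ r₂) : WG d := by
  -- Factor `D ⨿_A B ⟶ B` through `T`; both inclusions into `T` are in `CG ∩ WG`.
  have sqK := IsPushout.of_hasPushout i₁ i₂
  obtain ⟨X', Z', T, a, j, k, b, q, sqT, hX', ha, hj, -, hq, ek⟩ :=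
    h.factor (sqK.desc c (𝟙 B) (by simp [ec]))
  have hk : CG k := h.push _ _ _ _ sqT.flip hj
  have e1 : (pushout.inl i₁ i₂ ≫ k) ≫ q = c := by simp [ek]
  have e2 : (pushout.inr i₁ i₂ ≫ k) ≫ q = 𝟙 B := by simp [ek]
  have c1 : CG (pushout.inl i₁ i₂ ≫ k) := h.comp _ _ (h.push _ _ _ _ sqK.flip h₂) hk
  have c2 : CG (pushout.inr i₁ i₂ ≫ k) := h.comp _ _ (h.push _ _ _ _ sqK h₁) hk
  have w1 : WG (pushout.inl i₁ i₂ ≫ k) := h.two.2.2 _ q hq (e1.symm ▸ hc)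
  have w2 : WG (pushout.inr i₁ i₂ ≫ k) := h.two.2.2 _ q hq (e2.symm ▸ h.weq_id B)
  have e12 : i₁ ≫ pushout.inl i₁ i₂ ≫ k = i₂ ≫ pushout.inr i₁ i₂ ≫ k := by
    rw [← Category.assoc, sqK.w, Category.assoc]
  generalize pushout.inl i₁ i₂ ≫ k = d1 at *
  generalize pushout.inr i₁ i₂ ≫ k = d2 at *
  -- The cobase change `PT` of `T` is a pushout of both `P₁` and `P₂` along maps in `CG ∩ WG`.
  have sqP := IsPushout.of_hasPushout r₁ d1
  have big := sq₁.paste_vert sqP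
  rw [e12] at big
  have wv : WG (pushout.inl r₁ d1) := h.push_triv sqP.flip c1 w1
  have ww := sq₂.w
  have ww' : f ≫ l₁ ≫ pushout.inl r₁ d1 = i₂ ≫ d2 ≫ pushout.inr r₁ d1 := by
    rw [big.w, Category.assoc]
  have el2 : l₂ ≫ sq₂.desc _ _ ww' = l₁ ≫ pushout.inl r₁ d1 := sq₂.inl_desc _ _ _
  have er2 : r₂ ≫ sq₂.desc _ _ ww' = d2 ≫ pushout.inr r₁ d1 := sq₂.inr_desc _ _ _
  generalize sq₂.desc _ _ ww' = m at *
  rw [← el2] at big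
  have sqm : IsPushout r₂ d2 m (pushout.inr r₁ d1) := IsPushout.of_top big er2 sq₂
  have wm : WG m := h.push_triv sqm.flip c2 w2
  have wt : r₁ ≫ d = d1 ≫ q ≫ r₂ := by rw [← Category.assoc, e1, er]
  have ev : pushout.inl r₁ d1 ≫ sqP.desc _ _ wt = d := sqP.inl_desc _ _ _
  have em : m ≫ sqP.desc _ _ wt = 𝟙 P₂ := by
    apply sq₂.hom_ext
    · rw [← Category.assoc, el2, Category.assoc, ev, el, Category.comp_id]
    · rw [← Category.assoc, er2, Category.assoc, sqP.inr_desc, ← Category.assoc, e2]; simp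
  have hwt : WG (sqP.desc _ _ wt) := h.two.2.1 m _ wm (em.symm ▸ h.weq_id P₂)
  exact ev ▸ h.two.1 _ _ wv hwt

/-- Pushing out a retraction `r` of a map `s` in `CG ∩ WG` along a map in `CG` gives a map in
`WG`. That map is the cobase change along `r` of the counit `E ⨿_X B ⟶ B`. -/
lemma push_retraction (h : LLData W C WG CG FG) {E X B P : M} {r : E ⟶ X} {s : X ⟶ E}
    (hs : CG s) (ws : WG s) (e : s ≫ r = 𝟙 X) {j : E ⟶ B} (hj : CG j) {l : X ⟶ P}
    {b : B ⟶ P} (sq : IsPushout r j l b) : WG b := by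
  have sqD := IsPushout.of_hasPushout s (s ≫ j)
  have wB : WG (pushout.inr s (s ≫ j)) := h.push_triv sqD hs ws
  have cE : CG (pushout.inl s (s ≫ j)) := h.push _ _ _ _ sqD.flip (h.comp _ _ hs hj)
  have wc : s ≫ j = (s ≫ j) ≫ 𝟙 B := by simp
  have hc : WG (sqD.desc j (𝟙 B) wc) :=
    h.two.2.1 _ _ wB (by rw [sqD.inr_desc]; exact h.weq_id B)
  have wg : s ≫ r ≫ s ≫ j = (s ≫ j) ≫ 𝟙 B := by
    rw [← Category.assoc, e]; simp
  -- Cobase change along `s` followed by cobase change along `r` is the identity.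
  have sqB : IsPushout r (pushout.inl s (s ≫ j)) (s ≫ j) (sqD.desc (r ≫ s ≫ j) (𝟙 B) wg) := by
    refine IsPushout.of_left ?_ (by simp) sqD
    rw [e, sqD.inr_desc]
    exact IsPushout.of_horiz_isIso ⟨by simp⟩
  refine h.cobase_weq sqB sq cE hj (sqD.desc j (𝟙 B) wc) hc (by simp) b ?_ ?_
  · rw [Category.assoc, ← sq.w, ← Category.assoc, e, Category.id_comp]
  · apply sqD.hom_ext
    · rw [← Category.assoc, sqD.inl_desc, ← Category.assoc (pushout.inl _ _), sqD.inl_desc]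
      simp only [Category.assoc]
      rw [← sq.w, ← Category.assoc s, e, Category.id_comp]
    · simp

lemma leftProper_cofibrant (h : LLData W C WG CG FG) {A X B P : M} {f : A ⟶ X} {j : A ⟶ B}
    {l : X ⟶ P} {b : B ⟶ P} (sq : IsPushout f j l b) (hA : C (initial.to A))
    (hX : C (initial.to X)) (hf : WG f) (hj : CG j) : WG b := by
  obtain ⟨E, k, r, s, ck, cs, ws, wr, rfl, e⟩ := h.mappingCylinder f hA hX
  have wk : WG k := h.two.2.2 _ _ wr hf
  have sq1 := IsPushout.of_hasPushout k j
  have w : k ≫ r ≫ l = j ≫ b := by rw [← Category.assoc, sq.w]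
  have eb : pushout.inr k j ≫ sq1.desc _ _ w = b := sq1.inr_desc _ _ _
  have sq2 : IsPushout r (pushout.inl k j) l (sq1.desc _ _ w) := by
    refine IsPushout.of_left ?_ (by simp) sq1
    rw [eb]; exact sq
  rw [← eb]
  exact h.two.1 _ _ (h.push_triv sq1 ck wk)
    (h.push_retraction cs ws e (h.push _ _ _ _ sq1.flip hj) sq2)

/-- Left properness along a `CG`-map with cofibrant source, for a target `X` of `f` that need not
be cofibrant. -/
lemma leftProper_source_cofibrant (h : LLData W C WG CG FG) {A X B P : M} {f : A ⟶ X}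
    {j : A ⟶ B} {l : X ⟶ P} {b : B ⟶ P} (sq : IsPushout f j l b) (hA : C (initial.to A))
    (hf : WG f) (hj : CG j) : WG b := by
  obtain ⟨X', x, hX', hx, lx⟩ := h.cofReplace X
  obtain ⟨f', rfl⟩ := lx f hA
  have hf' : WG f' := h.two.2.2 _ _ (h.sub _ hx) hf
  have sq1 := IsPushout.of_hasPushout f' j
  have w : f' ≫ x ≫ l = j ≫ b := by rw [← Category.assoc, sq.w]
  have eb : pushout.inr f' j ≫ sq1.desc _ _ w = b := sq1.inr_desc _ _ _
  have sq2 : IsPushout x (pushout.inl f' j) l (sq1.desc _ _ w) := by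
    refine IsPushout.of_left ?_ (by simp) sq1
    rw [eb]; exact sq
  have c1 : CG (pushout.inl f' j) := h.push _ _ _ _ sq1.flip hj
  rw [← eb]
  exact h.two.1 _ _ (h.leftProper_cofibrant sq1 hA hX' hf' hj)
    (h.sub _ (h.pushW _ _ _ _ sq2 hx c1 hX' (h.cofibrant_of _ hX' c1)))

theorem leftProper (h : LLData W C WG CG FG) : LeftProper WG CG := by
  intro A X B P f i l b sq hf hi
  obtain ⟨A', B', Q, a, j, k, b', q, sqQ, hA', ha, hj, hb', hq, e⟩ := h.factor i
  have sqR := IsPushout.of_hasPushout f k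
  -- `Q ⟶ X ⨿_A Q` is in `WG`, since `X ⨿_A Q` is also the pushout of `B'` along `A' ⟶ A ⟶ X`.
  have wR : WG (pushout.inr f k) := by
    have := h.leftProper_source_cofibrant (sqQ.paste_horiz sqR) hA'
      (h.two.1 _ _ (h.sub _ ha) hf) hj
    exact h.two.2.1 _ _ (h.sub _ hb') this
  have w : f ≫ l = k ≫ q ≫ b := by rw [← Category.assoc, e, sq.w]
  have wd : WG (sqR.desc _ _ w) :=
    h.cobase_weq sqR sq (h.push _ _ _ _ sqQ.flip hj) hi q hq e _ (by simp) (by simp)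
  refine h.two.2.1 q b hq ?_
  rw [← sqR.inr_desc _ _ w]
  exact h.two.1 _ _ wR wd

end LLData

/-- Proposition 1.3: the model structure produced by Theorem 1.2 is left proper. -/
theorem llExtension_leftProper
    [HasFiniteLimits M] [HasFiniteColimits M]
    (W C F WG CG FG : MorphismProperty M)
    (hMS : IsModelStructure W C F)
    (hWsub : ∀ ⦃X Y : M⦄ (f : X ⟶ Y), W f → WG f)
    (hCsub : ∀ ⦃X Y : M⦄ (f : X ⟶ Y), CG f → C f)
    (hFsub : ∀ ⦃X Y : M⦄ (f : X ⟶ Y), FG f → F f)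
    (h1 : TwoOutOfThree WG)
    (h2W : ClosedUnderRetracts WG)
    (h2C : ClosedUnderRetracts CG)
    (h2F : ClosedUnderRetracts FG)
    (h3comp : ClosedUnderComposition CG)
    (h3push : ClosedUnderPushouts CG)
    (h4 : ∀ X : M, CG (initial.to X) ↔ C (initial.to X))
    (h5 : ∀ X : M, C (initial.to X) →
      ∃ (Cyl : M) (i : X ⨿ X ⟶ Cyl) (p : Cyl ⟶ X), CG i ∧ WG p ∧ i ≫ p = codiag X)
    (h6 : ∀ ⦃A X B P : M⦄ (f : A ⟶ X) (j : A ⟶ B) (inl : X ⟶ P) (inr : B ⟶ P),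
      IsPushout f j inl inr → W f → CG j →
      C (initial.to A) → C (initial.to B) → W inr)
    (h7 : ∀ ⦃A B X Y : M⦄ (j : A ⟶ B) (p : X ⟶ Y),
      CG j → WG j → FG p → HasLiftingProperty j p)
    (h8 : ∀ ⦃X Y : M⦄ (f : X ⟶ Y),
      ∃ (Z : M) (j : X ⟶ Z) (p : Z ⟶ Y), CG j ∧ WG j ∧ FG p ∧ j ≫ p = f) :
    LeftProper WG CG := by
  refine LLData.leftProper (W := W) (C := C) (FG := FG)
    ⟨hWsub, hCsub, h1, h2W, h3comp, h3push, h4, h5, h6, h7, h8, fun X => ?_⟩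
  obtain ⟨X', i, p, hi, hF, hW, -⟩ := hMS.fact_cof_trivFib (initial.to X)
  have ei : i = initial.to X' := Subsingleton.elim _ _
  refine ⟨X', p, ei ▸ hi, hW, fun A g hA => ?_⟩
  have := hMS.lift_cof_trivFib _ p hA hF hW
  have cs : CommSq (initial.to X') (initial.to A) p g := ⟨Subsingleton.elim _ _⟩
  exact ⟨cs.lift, cs.fac_right⟩

end LLExt
end

section
/- Let (W,C,F) be a model structure on a finitely bicomplete category M, and let W' and W^G be two classes of maps of M with W ⊆ W' ⊆ W^G. Define F^G to be the class of maps having the right lifting property with respect to all maps in C ∩ W', and define C^G to be the class of maps having the left lifting property with respect to all maps in F^G ∩ W^G. Assume: (1) W' and W^G have the two-out-of-three property; (2) W' and W^G are closed under retracts; (3) every map f factors as f = p∘j with j in C ∩ W' and p in F^G; (4) every map f factors as f = q∘i with i in C^G and q in F^G ∩ W^G. Then (W^G, C^G, F^G) is a model structure on M. -/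
/-!
Everything except one lifting axiom follows formally from the description of `CG` and `FG` by
lifting properties: such classes are closed under retracts, and a map in `C ∩ W'` lifts against all
of `FG`, hence is in `CG ∩ WG`, so that the factorization `C ∩ W'` followed by `FG` already has its
first factor in `CG ∩ WG`.

The remaining axiom, that `i` in `CG ∩ WG` lifts against `FG`, is the retract argument. Factor
`i = j ≫ q` with `j` in `C ∩ W'` and `q` in `FG`; by two-out-of-three in `WG`, the map `q` is in
`FG ∩ WG`, so `i` lifts against `q` and is therefore a retract of `j`, which lifts against `FG`.
-/

open CategoryTheory CategoryTheory.Limits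

universe v u v' u'

namespace LLExt

variable {M : Type u} [Category.{v} M]

/-- The data of a retract diagram as in `ClosedUnderRetracts`, bundled as a `RetractArrow`. -/
def retractArrowOfDiagram {A B A' B' : M} {f : A ⟶ B} {g : A' ⟶ B'} (i : A ⟶ A') (r : A' ⟶ A)
    (i' : B ⟶ B') (r' : B' ⟶ B) (hA : i ≫ r = 𝟙 A) (hB : i' ≫ r' = 𝟙 B)
    (hi : f ≫ i' = i ≫ g) (hr : g ≫ r' = r ≫ f) : RetractArrow f g where
  i := Arrow.homMk i i' hi.symm
  r := Arrow.homMk r r' hr.symm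
  retract := by ext <;> simp [hA, hB]

/-- Proposition 1.4: a variation of Theorem 1.2. -/
theorem prop_1_4 [HasFiniteLimits M] [HasFiniteColimits M]
    (W C F W' WG CG FG : MorphismProperty M)
    (hMS : IsModelStructure W C F)
    (hWW' : ∀ ⦃X Y : M⦄ (f : X ⟶ Y), W f → W' f)
    (hW'WG : ∀ ⦃X Y : M⦄ (f : X ⟶ Y), W' f → WG f)
    (hFGdef : ∀ ⦃X Y : M⦄ (p : X ⟶ Y),
      FG p ↔ ∀ ⦃A B : M⦄ (i : A ⟶ B), C i → W' i → HasLiftingProperty i p)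
    (hCGdef : ∀ ⦃A B : M⦄ (i : A ⟶ B),
      CG i ↔ ∀ ⦃X Y : M⦄ (p : X ⟶ Y), FG p → WG p → HasLiftingProperty i p)
    (h1 : TwoOutOfThree W')
    (h1' : TwoOutOfThree WG)
    (h2 : ClosedUnderRetracts W')
    (h2' : ClosedUnderRetracts WG)
    (h3 : ∀ ⦃X Y : M⦄ (f : X ⟶ Y),
      ∃ (Z : M) (j : X ⟶ Z) (p : Z ⟶ Y), C j ∧ W' j ∧ FG p ∧ j ≫ p = f)
    (h4 : ∀ ⦃X Y : M⦄ (f : X ⟶ Y),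
      ∃ (Z : M) (i : X ⟶ Z) (q : Z ⟶ Y), CG i ∧ FG q ∧ WG q ∧ i ≫ q = f) :
    IsModelStructure WG CG FG := by
  have trivCof_lift : ∀ ⦃A B X Y : M⦄ (i : A ⟶ B) (p : X ⟶ Y),
      CG i → WG i → FG p → HasLiftingProperty i p := by
    intro A B X Y i p hi hiW hp
    obtain ⟨Z, j, q, hj, hjW, hq, rfl⟩ := h3 i
    have hqW : WG q := h1'.2.1 j q (hW'WG j hjW) hiW
    have : HasLiftingProperty (j ≫ q) q := (hCGdef _).1 hi q hq hqW
    have : HasLiftingProperty j p := (hFGdef p).1 hp j hj hjW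
    exact (RetractArrow.ofLeftLiftingProperty (rfl : j ≫ q = j ≫ q)).leftLiftingProperty p
  refine ⟨h1', h2', ?_, ?_, trivCof_lift, ?_, h4, ?_⟩
  · intro A B A' B' f g i r i' r' hA hB hi hr hg
    rw [hCGdef]
    intro X Y p hp hpW
    have : HasLiftingProperty g p := (hCGdef g).1 hg p hp hpW
    exact (retractArrowOfDiagram i r i' r' hA hB hi hr).leftLiftingProperty p
  · intro A B A' B' f g i r i' r' hA hB hi hr hg
    rw [hFGdef]
    intro X Y k hk hkW
    have : HasLiftingProperty k g := (hFGdef g).1 hg k hk hkW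
    exact (retractArrowOfDiagram i r i' r' hA hB hi hr).rightLiftingProperty k
  · exact fun A B X Y i p hi hp hpW => (hCGdef i).1 hi p hp hpW
  · intro X Y f
    obtain ⟨Z, j, p, hj, hjW, hp, hf⟩ := h3 f
    exact ⟨Z, j, p, (hCGdef j).2 fun _ _ q hq _ => (hFGdef q).1 hq j hj hjW,
      hW'WG j hjW, hp, hf⟩

end LLExt
end

section
/- Let (W,C,F) be a model structure on a finitely bicomplete category M, and let W^G, C^G, F^G be classes of maps of M with W ⊆ W^G, C^G ⊆ C, F^G ⊆ F. Assume: (1) W^G has the two-out-of-three property; (2) W^G, C^G and F^G are closed under retracts; (3) F^G is closed under composition and pullback; (4) for every object X, the map X → ∗ is in F^G if and only if X is fibrant; (5) every fibrant object X admits a factorization X → Path X → X × X of the diagonal map with the first map in W^G and the second in F^G; (6) W is closed under pullback along maps in F^G between fibrant objects; (7) every commutative square with left vertical map in C^G and right vertical map in F^G ∩ W^G admits a diagonal lift; (8) every map f factors as f = q∘i with i in C^G and q in F^G ∩ W^G. Then (W^G, C^G, F^G) is a right proper model structure on M. -/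
/-!
The two halves of `theorem_1_5` are the missing weak factorization system
`(CG ∩ WG, FG)` and right properness.

*Factorization* (`exists_factorization`). By the retract argument `FG ∩ WG` is the class of maps
with the right lifting property against `CG`; in particular it is stable under base change. The
path objects therefore give the usual mapping path space factorization of a map between fibrant
objects as a map in `WG` followed by one in `FG` (`mappingPath`). For a general `f : X ⟶ Y`, choose
a fibrant replacement `X ⟶ X'` over `Y ⟶ Y'`, factor `X' ⟶ P ⟶ Y'` in this way, and pull `P` back
along `Y ⟶ Y'`. The projection `Q ⟶ P` is in `W` because `P ⟶ Y'` is a map of `FG` between fibrant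
objects, so `X ⟶ Q` is in `WG` by two-out-of-three. Factoring `X ⟶ Q` as a map in `CG` followed by
one in `FG ∩ WG` finishes the construction.

*Lifting*. If `i` is in `CG ∩ WG`, `p` is in `FG` and `a` is the top of a square from `i` to `p`,
base change to the codomain of `i`, and factor the resulting map to the pullback as a map in
`CG ∩ WG` followed by one in `FG`. The composite of the second factor with the base change of `p`
is in `FG ∩ WG` by two-out-of-three, so `i` lifts against it.

*Right properness*. Two facts hold in every model structure: base change along any map `X ⟶ Z`
preserves weak equivalences between fibrations over `Z` (`weq_baseChange`, Ken Brown's lemma), and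
the base change of a weak equivalence between fibrant objects along a fibration is a weak
equivalence (`weq_pullback_of_fibrant`). For arbitrary `f : X ⟶ Z` in `WG` and `g : Y ⟶ Z` in `FG`,
take a fibrant replacement `f' : X' ⟶ Z'` of `f` and replace `Y ⟶ Z'` by `Y' ⟶ Z'` in `FG`. The
second fact applies to `f'`, the hypothesis on `W` compares it with the base change of `f` along
`Y' ×_{Z'} Z ⟶ Z`, and the first fact compares that with the base change of `f` along `g`.
-/

open CategoryTheory CategoryTheory.Limits

universe v u v' u'

namespace LLExt

variable {M : Type u} [Category.{v} M]

/-! ### Weak factorization systems -/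

/-- The retract argument: if every map factors as a map in `L` followed by a map in `R`, and `R` is
closed under retracts, then maps with the right lifting property against `L` are in `R`. -/
lemma of_rlp {L R : MorphismProperty M} (hR : ClosedUnderRetracts R)
    (fact : ∀ ⦃X Y : M⦄ (f : X ⟶ Y), ∃ (Z : M) (i : X ⟶ Z) (p : Z ⟶ Y), L i ∧ R p ∧ i ≫ p = f)
    {X Y : M} (f : X ⟶ Y)
    (hf : ∀ ⦃A B : M⦄ (i : A ⟶ B), L i → HasLiftingProperty i f) : R f := by
  obtain ⟨Z, i, p, hi, hp, e⟩ := fact f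
  have := hf i hi
  have sq : CommSq (𝟙 X) i f p := ⟨by simp [e]⟩
  exact hR f p i sq.lift (𝟙 _) (𝟙 _) sq.fac_left (by simp) (by simp [e]) (by simp) hp

/-- The right class of a weak factorization system is stable under base change. -/
lemma rlp_pullback {L R : MorphismProperty M} (hR : ClosedUnderRetracts R)
    (fact : ∀ ⦃X Y : M⦄ (f : X ⟶ Y), ∃ (Z : M) (i : X ⟶ Z) (p : Z ⟶ Y), L i ∧ R p ∧ i ≫ p = f)
    (lift : ∀ ⦃A B X Y : M⦄ (i : A ⟶ B) (p : X ⟶ Y), L i → R p → HasLiftingProperty i p) :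
    ClosedUnderPullbacks R := by
  intro P X Y Z fst snd f g sq hf
  refine of_rlp hR fact snd fun A B i hi => ?_
  have := lift i f hi hf
  exact sq.hasLiftingProperty i

lemma rlp_comp {L R : MorphismProperty M} (hR : ClosedUnderRetracts R)
    (fact : ∀ ⦃X Y : M⦄ (f : X ⟶ Y), ∃ (Z : M) (i : X ⟶ Z) (p : Z ⟶ Y), L i ∧ R p ∧ i ≫ p = f)
    (lift : ∀ ⦃A B X Y : M⦄ (i : A ⟶ B) (p : X ⟶ Y), L i → R p → HasLiftingProperty i p) :
    ClosedUnderComposition R := by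
  intro X Y Z f g hf hg
  refine of_rlp hR fact (f ≫ g) fun A B i hi => ?_
  have := lift i f hi hf
  have := lift i g hi hg
  infer_instance

lemma retracts_inf {K K' : MorphismProperty M} (h : ClosedUnderRetracts K)
    (h' : ClosedUnderRetracts K') : ClosedUnderRetracts (K ⊓ K') :=
  fun _ _ _ _ f g i r i' r' e₁ e₂ e₃ e₄ hg =>
    ⟨h f g i r i' r' e₁ e₂ e₃ e₄ hg.1, h' f g i r i' r' e₁ e₂ e₃ e₄ hg.2⟩

/-! ### Generalities on model structures -/

namespace IsModelStructure

variable {W C F : MorphismProperty M} (ms : IsModelStructure W C F)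
include ms

lemma weq_id_s6 (X : M) : W (𝟙 X) := by
  obtain ⟨Z, i, p, -, -, hp, e⟩ := ms.fact_cof_trivFib (𝟙 X)
  exact ms.weq_retracts (𝟙 X) p i p (𝟙 X) (𝟙 X) e (by simp) (by simp [e]) (by simp) hp

lemma weq_section {X Y : M} {s : X ⟶ Y} {r : Y ⟶ X} (e : s ≫ r = 𝟙 X) (hr : W r) : W s :=
  ms.weq_twoOutOfThree.2.2 s r hr (e ▸ ms.weq_id_s6 X)

lemma weq_retraction {X Y : M} {s : X ⟶ Y} {r : Y ⟶ X} (e : s ≫ r = 𝟙 X) (hs : W s) : W r :=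
  ms.weq_twoOutOfThree.2.1 s r hs (e ▸ ms.weq_id_s6 X)

lemma fib_pullback : ClosedUnderPullbacks F :=
  rlp_pullback (L := C ⊓ W) ms.fib_retracts
    (fun _ _ f => by
      obtain ⟨Z, i, p, h₁, h₂, h₃, e⟩ := ms.fact_trivCof_fib f
      exact ⟨Z, i, p, ⟨h₁, h₂⟩, h₃, e⟩)
    (fun _ _ _ _ i p hi hp => ms.lift_trivCof_fib i p hi.1 hi.2 hp)

lemma fib_comp : ClosedUnderComposition F :=
  rlp_comp (L := C ⊓ W) ms.fib_retracts
    (fun _ _ f => by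
      obtain ⟨Z, i, p, h₁, h₂, h₃, e⟩ := ms.fact_trivCof_fib f
      exact ⟨Z, i, p, ⟨h₁, h₂⟩, h₃, e⟩)
    (fun _ _ _ _ i p hi hp => ms.lift_trivCof_fib i p hi.1 hi.2 hp)

lemma trivFib_pullback : ClosedUnderPullbacks (F ⊓ W) :=
  rlp_pullback (L := C) (retracts_inf ms.fib_retracts ms.weq_retracts)
    (fun _ _ f => by
      obtain ⟨Z, i, p, h₁, h₂, h₃, e⟩ := ms.fact_cof_trivFib f
      exact ⟨Z, i, p, h₁, ⟨h₂, h₃⟩, e⟩)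
    (fun _ _ _ _ i p hi hp => ms.lift_cof_trivFib i p hi hp.1 hp.2)

variable [HasFiniteLimits M]

lemma fib_prod_fst {X Y : M} (hY : F (terminal.from Y)) : F (prod.fst : X ⨯ Y ⟶ X) :=
  ms.fib_pullback _ _ _ _ (IsPullback.of_hasBinaryProduct' _ _).flip hY

lemma fib_prod_snd {X Y : M} (hX : F (terminal.from X)) : F (prod.snd : X ⨯ Y ⟶ Y) :=
  ms.fib_pullback _ _ _ _ (IsPullback.of_hasBinaryProduct' _ _) hX

lemma fibrant_of_fib {X Y : M} (p : X ⟶ Y) (hp : F p) (hY : F (terminal.from Y)) :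
    F (terminal.from X) := by
  have := ms.fib_comp p _ hp hY
  rwa [terminal.comp_from] at this

/-- Two weak equivalences with the same source, whose targets are fibrant over `B`, extend to a
span of trivial fibrations over `B`. With `u = 𝟙 Y` this is Ken Brown's factorization of `v`. -/
lemma exists_span {Y E₀ E₁ B : M} (u : Y ⟶ E₀) (v : Y ⟶ E₁) (p₀ : E₀ ⟶ B) (p₁ : E₁ ⟶ B)
    (hu : W u) (hv : W v) (hp₀ : F p₀) (hp₁ : F p₁) (h : u ≫ p₀ = v ≫ p₁) :
    ∃ (E : M) (j : Y ⟶ E) (e₀ : E ⟶ E₀) (e₁ : E ⟶ E₁), C j ∧ W j ∧ (F ⊓ W) e₀ ∧ (F ⊓ W) e₁ ∧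
      j ≫ e₀ = u ∧ j ≫ e₁ = v ∧ e₀ ≫ p₀ = e₁ ≫ p₁ := by
  obtain ⟨E, j, q, hjC, hjW, hq, e⟩ := ms.fact_trivCof_fib (pullback.lift u v h)
  have sq := IsPullback.of_hasPullback p₀ p₁
  have h0 : j ≫ q ≫ pullback.fst p₀ p₁ = u := by rw [← Category.assoc, e, pullback.lift_fst]
  have h1 : j ≫ q ≫ pullback.snd p₀ p₁ = v := by rw [← Category.assoc, e, pullback.lift_snd]
  refine ⟨E, j, q ≫ pullback.fst _ _, q ≫ pullback.snd _ _, hjC, hjW,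
    ⟨ms.fib_comp _ _ hq (ms.fib_pullback _ _ _ _ sq.flip hp₁),
      ms.weq_twoOutOfThree.2.1 j _ hjW (h0 ▸ hu)⟩,
    ⟨ms.fib_comp _ _ hq (ms.fib_pullback _ _ _ _ sq hp₀),
      ms.weq_twoOutOfThree.2.1 j _ hjW (h1 ▸ hv)⟩, h0, h1, ?_⟩
  simp [pullback.condition]

/-- Ken Brown's lemma over a base: if `w` is a weak equivalence between fibrations over `Z`, then
its base change `w'` along `k : X ⟶ Z` is a weak equivalence. The pullback of the source of `w`
is taken in two stages. -/
lemma weq_baseChange {Y Q Z X Y' Q' : M} {w : Y ⟶ Q} {b : Q ⟶ Z} {k : X ⟶ Z} {q' : Q' ⟶ Q}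
    {b' : Q' ⟶ X} {y' : Y' ⟶ Y} {w' : Y' ⟶ Q'} (hQ : IsPullback q' b' b k)
    (hY : IsPullback y' w' w q') (hw : W w) (hb : F b) (hwb : F (w ≫ b)) : W w' := by
  obtain ⟨E, j, r, q, -, -, hr, hq, hjr, hjq, hE⟩ :=
    ms.exists_span (𝟙 Y) w (w ≫ b) b (ms.weq_id_s6 Y) hw hwb hb (by simp)
  have hE' := IsPullback.of_hasPullback q q'
  have hYX := hY.paste_vert hQ
  have c : (pullback.fst q q' ≫ r) ≫ w ≫ b = (pullback.snd q q' ≫ b') ≫ k := by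
    rw [Category.assoc, hE, pullback.condition_assoc, hQ.w, Category.assoc]
  let r' := hYX.lift _ _ c
  have hr'y : r' ≫ y' = pullback.fst q q' ≫ r := hYX.lift_fst _ _ c
  have hr'b : r' ≫ w' ≫ b' = pullback.snd q q' ≫ b' := hYX.lift_snd _ _ c
  have hr' : (F ⊓ W) r' := by
    refine ms.trivFib_pullback _ _ _ _
      (IsPullback.of_bot (h₁₁ := pullback.fst q q') (v₁₁ := r') ?_ hr'y.symm hYX) hr
    rw [hr'b, hE]
    exact hE'.paste_vert hQ
  let j' : Y' ⟶ pullback q q' := pullback.lift (y' ≫ j) w' (by rw [Category.assoc, hjq, hY.w])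
  have hj'1 : j' ≫ pullback.fst q q' = y' ≫ j := pullback.lift_fst _ _ _
  have hj'2 : j' ≫ pullback.snd q q' = w' := pullback.lift_snd _ _ _
  have hj'r' : j' ≫ r' = 𝟙 Y' := by
    apply hYX.hom_ext
    · rw [Category.assoc, hr'y, reassoc_of% hj'1, hjr, Category.comp_id, Category.id_comp]
    · rw [Category.assoc, hr'b, reassoc_of% hj'2, Category.id_comp]
  rw [← hj'2]
  exact ms.weq_twoOutOfThree.1 _ _ (ms.weq_section hj'r' hr'.2)
    (ms.trivFib_pullback _ _ _ _ hE' hq).2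

/-- Let `s : X ⟶ T` be a trivial cofibration to a fibrant object that is a section of a trivial
fibration `r`. Its base change along a fibration `g : Y ⟶ T` is a weak equivalence: a right homotopy
`H` from `𝟙` to `r ≫ s` links `Y`, which is its own base change along `𝟙`, to its base change `R`
along `r ≫ s`, by a span of trivial fibrations over `T`. Pulling this span back along `s` gives the
result by two-out-of-three, since the base change of `R` along `s` is again `P`, and `P ⟶ R` is a
section of a trivial fibration. -/
lemma weq_pullback_section {P X Y T : M} {fst : P ⟶ X} {snd : P ⟶ Y} {s : X ⟶ T} {g : Y ⟶ T}
    (hP : IsPullback fst snd s g) (hg : F g) (hT : F (terminal.from T))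
    (hsC : C s) (hsW : W s) (r : T ⟶ X) (hsr : s ≫ r = 𝟙 X) (hr : (F ⊓ W) r) : W snd := by
  obtain ⟨I, c, p, -, hcW, hp, hcp⟩ := ms.fact_trivCof_fib (diag T)
  obtain ⟨d₀, hd₀⟩ : ∃ d₀, d₀ = p ≫ prod.fst := ⟨_, rfl⟩
  obtain ⟨d₁, hd₁⟩ : ∃ d₁, d₁ = p ≫ prod.snd := ⟨_, rfl⟩
  have hc0 : c ≫ d₀ = 𝟙 T := by rw [hd₀, ← Category.assoc, hcp, prod.lift_fst]
  have hc1 : c ≫ d₁ = 𝟙 T := by rw [hd₁, ← Category.assoc, hcp, prod.lift_snd]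
  have hd0 : (F ⊓ W) d₀ :=
    ⟨hd₀ ▸ ms.fib_comp _ _ hp (ms.fib_prod_fst hT), ms.weq_retraction hc0 hcW⟩
  have hd1 : (F ⊓ W) d₁ :=
    ⟨hd₁ ▸ ms.fib_comp _ _ hp (ms.fib_prod_snd hT), ms.weq_retraction hc1 hcW⟩
  -- the homotopy from `𝟙` to `r ≫ s`, constant on `X`
  obtain ⟨H, hH0, hH1⟩ : ∃ H : T ⟶ I, H ≫ d₀ = 𝟙 T ∧ H ≫ d₁ = r ≫ s := by
    have := ms.lift_trivCof_fib s p hsC hsW hp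
    have sq : CommSq (s ≫ c) s p (prod.lift (𝟙 T) (r ≫ s)) := ⟨by
      rw [Category.assoc, hcp]
      ext <;> simp [reassoc_of% hsr]⟩
    refine ⟨sq.lift, ?_, ?_⟩
    · rw [hd₀, ← Category.assoc, sq.fac_right, prod.lift_fst]
    · rw [hd₁, ← Category.assoc, sq.fac_right, prod.lift_snd]
  have hE0 := IsPullback.of_hasPullback g d₀
  have hE1 := IsPullback.of_hasPullback g d₁
  set a₀ := pullback.fst g d₀
  set b₀ := pullback.snd g d₀
  set a₁ := pullback.fst g d₁
  set b₁ := pullback.snd g d₁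
  have cu : 𝟙 Y ≫ g = (g ≫ c) ≫ d₀ := by simp [hc0]
  have cv : 𝟙 Y ≫ g = (g ≫ c) ≫ d₁ := by simp [hc1]
  -- the span over the path object, whose base change along `H` is the span described above
  obtain ⟨E, -, e₀, e₁, -, -, he0, he1, -, -, hEB⟩ := ms.exists_span
    (hE0.lift _ _ cu) (hE1.lift _ _ cv) b₀ b₁
    (ms.weq_section (hE0.lift_fst _ _ cu) (ms.trivFib_pullback _ _ _ _ hE0.flip hd0).2)
    (ms.weq_section (hE1.lift_fst _ _ cv) (ms.trivFib_pullback _ _ _ _ hE1.flip hd1).2)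
    (ms.fib_pullback _ _ _ _ hE0 hg) (ms.fib_pullback _ _ _ _ hE1 hg)
    (by rw [hE0.lift_snd, hE1.lift_snd])
  have hK := IsPullback.of_hasPullback (e₀ ≫ b₀) H
  set K := pullback (e₀ ≫ b₀) H
  set k := pullback.fst (e₀ ≫ b₀) H
  set t := pullback.snd (e₀ ≫ b₀) H
  have hkt : k ≫ e₀ ≫ b₀ = t ≫ H := hK.w
  have hkt1 : k ≫ e₁ ≫ b₁ = t ≫ H := by rw [← hEB, hkt]
  obtain ⟨κ₀, hκ₀⟩ : ∃ κ₀, κ₀ = k ≫ e₀ ≫ a₀ := ⟨_, rfl⟩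
  have hκ₀g : κ₀ ≫ g = t := by
    rw [hκ₀, Category.assoc, Category.assoc, hE0.w, reassoc_of% hkt, hH0, Category.comp_id]
  have hκ₀TF : (F ⊓ W) κ₀ := by
    have cm : 𝟙 Y ≫ g = (g ≫ H) ≫ d₀ := by simp [hH0]
    have bot : IsPullback (hE0.lift _ _ cm) g b₀ H := by
      refine IsPullback.of_right ?_ (hE0.lift_snd _ _ cm) hE0
      rw [hE0.lift_fst, hH0]
      exact IsPullback.of_id_fst
    refine ms.trivFib_pullback _ _ _ _
      (IsPullback.of_bot (h₁₁ := k) (v₁₁ := κ₀) (v₁₂ := e₀) ?_ ?_ bot) he0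
    · rwa [hκ₀g]
    · apply hE0.hom_ext
      · rw [Category.assoc, Category.assoc, hE0.lift_fst, hκ₀, Category.comp_id]
      · rw [Category.assoc, Category.assoc, hE0.lift_snd, reassoc_of% hκ₀g, hkt]
  have hR := IsPullback.of_hasPullback fst r
  set R := pullback fst r
  set ρ := pullback.fst fst r
  set σ := pullback.snd fst r
  have hRY : IsPullback (ρ ≫ snd) σ g (r ≫ s) := hR.paste_horiz hP.flip
  have cκ : (k ≫ e₁ ≫ a₁) ≫ g = t ≫ r ≫ s := by
    rw [Category.assoc, Category.assoc, hE1.w, reassoc_of% hkt1, hH1]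
  obtain ⟨κ₁, hκ₁, hκ₁σ⟩ : ∃ κ₁ : K ⟶ R, κ₁ ≫ ρ ≫ snd = k ≫ e₁ ≫ a₁ ∧ κ₁ ≫ σ = t :=
    ⟨hRY.lift _ _ cκ, hRY.lift_fst _ _ cκ, hRY.lift_snd _ _ cκ⟩
  have hκ₁TF : (F ⊓ W) κ₁ := by
    have cm : (ρ ≫ snd) ≫ g = (σ ≫ H) ≫ d₁ := by rw [Category.assoc σ, hH1, hRY.w]
    have bot : IsPullback (hE1.lift _ _ cm) σ b₁ H := by
      refine IsPullback.of_right ?_ (hE1.lift_snd _ _ cm) hE1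
      rwa [hE1.lift_fst, hH1]
    refine ms.trivFib_pullback _ _ _ _
      (IsPullback.of_bot (h₁₁ := k) (v₁₁ := κ₁) (v₁₂ := e₁) ?_ ?_ bot) he1
    · rwa [hκ₁σ, ← hEB]
    · apply hE1.hom_ext
      · rw [Category.assoc, Category.assoc, hE1.lift_fst, hκ₁]
      · rw [Category.assoc, Category.assoc, hE1.lift_snd, reassoc_of% hκ₁σ, hkt1]
  have cz : 𝟙 P ≫ fst = (fst ≫ s) ≫ r := by simp [hsr]
  obtain ⟨z, hzρ, hzσ⟩ : ∃ z : P ⟶ R, z ≫ ρ = 𝟙 P ∧ z ≫ σ = fst ≫ s :=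
    ⟨hR.lift _ _ cz, hR.lift_fst _ _ cz, hR.lift_snd _ _ cz⟩
  have hzW : W z := ms.weq_section hzρ (ms.trivFib_pullback _ _ _ _ hR.flip hr).2
  have hzP : IsPullback z fst σ s := by
    refine IsPullback.of_right ?_ hzσ hR
    rw [hzρ, hsr]
    exact IsPullback.of_id_fst
  have hL := IsPullback.of_hasPullback κ₁ z
  set L := pullback κ₁ z
  set l := pullback.fst κ₁ z
  set l₁ := pullback.snd κ₁ z
  have hl : W l := by
    refine ms.weq_twoOutOfThree.2.2 l κ₁ hκ₁TF.2 ?_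
    rw [hL.w]
    exact ms.weq_twoOutOfThree.1 _ _ (ms.trivFib_pullback _ _ _ _ hL hκ₁TF).2 hzW
  have hLX : IsPullback l (l₁ ≫ fst) (κ₀ ≫ g) s := by
    have := hL.paste_vert hzP
    rwa [hκ₁σ, ← hκ₀g] at this
  have cl : (l ≫ κ₀) ≫ g = (l₁ ≫ fst) ≫ s := by rw [Category.assoc, hLX.w]
  obtain ⟨l₀, hl₀, hl₀'⟩ : ∃ l₀ : L ⟶ P, l₀ ≫ snd = l ≫ κ₀ ∧ l₀ ≫ fst = l₁ ≫ fst :=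
    ⟨hP.flip.lift _ _ cl, hP.flip.lift_fst _ _ cl, hP.flip.lift_snd _ _ cl⟩
  have hl₀TF : (F ⊓ W) l₀ := by
    refine ms.trivFib_pullback _ _ _ _
      (IsPullback.of_bot (h₁₁ := l) (v₁₁ := l₀) (v₁₂ := κ₀) ?_ hl₀.symm hP.flip) hκ₀TF
    rwa [hl₀']
  refine ms.weq_twoOutOfThree.2.1 l₀ snd hl₀TF.2 ?_
  rw [hl₀]
  exact ms.weq_twoOutOfThree.1 _ _ hl hκ₀TF.2

/-- In every model structure, the base change of a weak equivalence between fibrant objects along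
a fibration is a weak equivalence. -/
lemma weq_pullback_of_fibrant {P X Y Z : M} {fst : P ⟶ X} {snd : P ⟶ Y} {f : X ⟶ Z} {g : Y ⟶ Z}
    (hP : IsPullback fst snd f g) (hf : W f) (hg : F g)
    (hX : F (terminal.from X)) (hZ : F (terminal.from Z)) : W snd := by
  obtain ⟨T, s, r, q, hsC, hsW, hr, hq, hsr, hsq, -⟩ :=
    ms.exists_span (𝟙 X) f (terminal.from X) (terminal.from Z) (ms.weq_id_s6 X) hf hX hZ
      (Subsingleton.elim _ _)
  have hS := IsPullback.of_hasPullback q g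
  have c : (fst ≫ s) ≫ q = snd ≫ g := by rw [Category.assoc, hsq, hP.w]
  have hPS : IsPullback fst (hS.lift _ _ c) s (pullback.fst q g) := by
    refine (IsPullback.of_right (h₁₁ := hS.lift _ _ c) ?_ (hS.lift_fst _ _ c) hS.flip).flip
    rw [hS.lift_snd, hsq]
    exact hP.flip
  rw [← hS.lift_snd _ _ c]
  exact ms.weq_twoOutOfThree.1 _ _
    (ms.weq_pullback_section hPS (ms.fib_pullback _ _ _ _ hS.flip hg)
      (ms.fibrant_of_fib q hq.1 hZ) hsC hsW r hsr hr)
    (ms.trivFib_pullback _ _ _ _ hS hq).2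

/-- Every map `f` has a fibrant replacement `f'`. -/
lemma exists_fibrant_replacement {X Y : M} (f : X ⟶ Y) :
    ∃ (X' Y' : M) (x : X ⟶ X') (y : Y ⟶ Y') (f' : X' ⟶ Y'), W x ∧ W y ∧
      F (terminal.from X') ∧ F (terminal.from Y') ∧ x ≫ f' = f ≫ y := by
  obtain ⟨Y', y, p, -, hy, hp, -⟩ := ms.fact_trivCof_fib (terminal.from Y)
  obtain ⟨X', x, f', -, hx, hf', e⟩ := ms.fact_trivCof_fib (f ≫ y)
  obtain rfl : p = terminal.from Y' := Subsingleton.elim _ _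
  exact ⟨X', Y', x, y, f', hx, hy, ms.fibrant_of_fib f' hf' hp, hp, e⟩

end IsModelStructure

/-! ### Factorizations from path objects -/

/-- The mapping path space factorization: given a path object `Q` on `Y`, where `X` and
`Y` are fibrant, every `f : X ⟶ Y` is a map in `WG` followed by a map in `FG`. -/
lemma mappingPath [HasFiniteLimits M] {WG FG : MorphismProperty M} (h1 : TwoOutOfThree WG)
    (hid : ∀ X : M, WG (𝟙 X)) (h3comp : ClosedUnderComposition FG)
    (h3pull : ClosedUnderPullbacks FG) (hTF : ClosedUnderPullbacks (FG ⊓ WG))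
    {X Y Q : M} (f : X ⟶ Y) (hX : FG (terminal.from X)) (hY : FG (terminal.from Y))
    (s : Y ⟶ Q) (p : Q ⟶ Y ⨯ Y) (hs : WG s) (hp : FG p) (hsp : s ≫ p = diag Y) :
    ∃ (T : M) (i : X ⟶ T) (q : T ⟶ Y), WG i ∧ FG q ∧ i ≫ q = f := by
  have hd : (FG ⊓ WG) (p ≫ prod.fst) :=
    ⟨h3comp _ _ hp (h3pull _ _ _ _ (IsPullback.of_hasBinaryProduct' _ _).flip hY),
      h1.2.1 s _ hs (by rw [← Category.assoc, hsp, prod.lift_fst]; exact hid Y)⟩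
  -- `T = Q ×_{Y ⨯ Y} (X ⨯ Y)`, which is also the base change of `p ≫ prod.fst` along `f`
  have hT := IsPullback.of_hasPullback p (prod.map f (𝟙 Y))
  have hXY : IsPullback (prod.map f (𝟙 Y)) prod.fst prod.fst f := by
    refine (IsPullback.of_bot (h₁₁ := prod.fst) (v₁₁ := prod.map f (𝟙 Y)) (v₁₂ := f)
      (v₂₁ := prod.snd) (v₂₂ := terminal.from Y) (h₃₁ := terminal.from Y) ?_ (by simp)
      (IsPullback.of_hasBinaryProduct' _ _)).flip
    rw [prod.map_snd, Category.comp_id, terminal.comp_from]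
    exact (IsPullback.of_hasBinaryProduct' _ _)
  have hTX := hT.paste_vert hXY
  have c : (f ≫ s) ≫ p ≫ prod.fst = 𝟙 X ≫ f := by
    rw [Category.assoc, ← Category.assoc s, hsp, prod.lift_fst, Category.comp_id, Category.id_comp]
  refine ⟨_, hTX.lift _ _ c, pullback.snd p (prod.map f (𝟙 Y)) ≫ prod.snd, ?_, ?_, ?_⟩
  · exact h1.2.2 _ _ (hTF _ _ _ _ hTX hd).2 (by rw [hTX.lift_snd]; exact hid X)
  · exact h3comp _ _ (h3pull _ _ _ _ hT hp) (h3pull _ _ _ _ (IsPullback.of_hasBinaryProduct' _ _) hX)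
  · have : pullback.snd p (prod.map f (𝟙 Y)) ≫ prod.snd
        = pullback.fst p (prod.map f (𝟙 Y)) ≫ p ≫ prod.snd := by
      rw [hT.w_assoc]; simp
    rw [this, ← Category.assoc, hTX.lift_fst, Category.assoc, ← Category.assoc s, hsp,
      prod.lift_snd, Category.comp_id]

/-- The factorization of an arbitrary map as a map in `WG` followed by a map in `FG`, deduced from
the case of maps between fibrant objects. -/
lemma exists_factorization [HasFiniteLimits M] {W C F WG FG : MorphismProperty M}
    (ms : IsModelStructure W C F)
    (hWsub : ∀ ⦃X Y : M⦄ (f : X ⟶ Y), W f → WG f)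
    (hFsub : ∀ ⦃X Y : M⦄ (f : X ⟶ Y), FG f → F f)
    (h1 : TwoOutOfThree WG) (h3pull : ClosedUnderPullbacks FG)
    (h6 : ∀ ⦃P X Y Z : M⦄ (fst : P ⟶ X) (snd : P ⟶ Y) (f : X ⟶ Z) (g : Y ⟶ Z),
      IsPullback fst snd f g → W f → FG g →
      F (terminal.from Y) → F (terminal.from Z) → W snd)
    (hfib : ∀ ⦃X Y : M⦄ (f : X ⟶ Y), F (terminal.from X) → F (terminal.from Y) →
      ∃ (T : M) (i : X ⟶ T) (q : T ⟶ Y), WG i ∧ FG q ∧ i ≫ q = f)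
    {X Y : M} (f : X ⟶ Y) : ∃ (T : M) (i : X ⟶ T) (q : T ⟶ Y), WG i ∧ FG q ∧ i ≫ q = f := by
  obtain ⟨X', Y', x, y, f', hx, hy, hX', hY', e⟩ := ms.exists_fibrant_replacement f
  obtain ⟨P, i, q, hi, hq, hiq⟩ := hfib f' hX' hY'
  have hQ := IsPullback.of_hasPullback y q
  have hQP : W (pullback.snd y q) :=
    h6 _ _ _ _ hQ hy hq (ms.fibrant_of_fib q (hFsub _ hq) hY') hY'
  have c : f ≫ y = (x ≫ i) ≫ q := by rw [Category.assoc, hiq, e]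
  refine ⟨_, hQ.lift _ _ c, pullback.fst y q, ?_, h3pull _ _ _ _ hQ.flip hq, hQ.lift_fst _ _ c⟩
  exact h1.2.2 _ _ (hWsub _ hQP) (by rw [hQ.lift_snd]; exact h1.1 _ _ (hWsub _ hx) hi)

/-! ### Right properness -/

/-- If a model structure `(WG, CG, FG)` has `W ⊆ WG`, `FG ⊆ F` and the same fibrant objects as
`(W, C, F)`, and `W` is stable under base change along maps in `FG` between fibrant objects, then
`(WG, CG, FG)` is right proper. -/
lemma rightProper_of_sub [HasFiniteLimits M] {W C F WG CG FG : MorphismProperty M}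
    (ms : IsModelStructure W C F) (msG : IsModelStructure WG CG FG)
    (hWsub : ∀ ⦃X Y : M⦄ (f : X ⟶ Y), W f → WG f)
    (hFsub : ∀ ⦃X Y : M⦄ (f : X ⟶ Y), FG f → F f)
    (h4 : ∀ X : M, FG (terminal.from X) ↔ F (terminal.from X))
    (h6 : ∀ ⦃P X Y Z : M⦄ (fst : P ⟶ X) (snd : P ⟶ Y) (f : X ⟶ Z) (g : Y ⟶ Z),
      IsPullback fst snd f g → W f → FG g →
      F (terminal.from Y) → F (terminal.from Z) → W snd) : RightProper WG FG := by
  intro P X Y Z fst snd f g hP hf hg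
  have h1 := msG.weq_twoOutOfThree
  obtain ⟨X', Z', x, z, f', hx, hz, hX', hZ', e⟩ := ms.exists_fibrant_replacement f
  have hf' : WG f' :=
    h1.2.1 x f' (hWsub _ hx) (e ▸ h1.1 _ _ hf (hWsub _ hz))
  obtain ⟨Y', y, g', -, hy, hg', eg⟩ := msG.fact_trivCof_fib (g ≫ z)
  have hY' : F (terminal.from Y') := ms.fibrant_of_fib g' (hFsub _ hg') hZ'
  have hN := IsPullback.of_hasPullback f' g'
  have hNg : FG (pullback.fst f' g') := msG.fib_pullback _ _ _ _ hN.flip hg'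
  have hNY : WG (pullback.snd f' g') :=
    msG.weq_pullback_of_fibrant hN hf' hg' ((h4 _).2 hX') ((h4 _).2 hZ')
  have hQ := IsPullback.of_hasPullback z g'
  have hQW : W (pullback.snd z g') := h6 _ _ _ _ hQ hz hg' hY' hZ'
  have hQF : FG (pullback.fst z g') := msG.fib_pullback _ _ _ _ hQ.flip hg'
  have hS := IsPullback.of_hasPullback f (pullback.fst z g')
  set sX := pullback.fst f (pullback.fst z g')
  set sQ := pullback.snd f (pullback.fst z g')
  -- `sQ` is the base change of `f` along the fibration `Y' ×_{Z'} Z ⟶ Z` replacing `g`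
  have hsQ : WG sQ := by
    have cv : (sX ≫ x) ≫ f' = (sQ ≫ pullback.snd z g') ≫ g' := by
      rw [Category.assoc, e, hS.w_assoc, hQ.w, Category.assoc]
    have hv : IsPullback sX (hN.lift _ _ cv) x (pullback.fst f' g') := by
      refine (IsPullback.of_right ?_ (hN.lift_fst _ _ cv) hN.flip).flip
      rw [hN.lift_snd, e]
      exact hS.flip.paste_horiz hQ.flip
    have hvW : W (hN.lift _ _ cv) :=
      h6 _ _ _ _ hv hx hNg (ms.fibrant_of_fib _ (hFsub _ hNg) hX') hX'
    refine h1.2.2 sQ _ (hWsub _ hQW) ?_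
    rw [← hN.lift_snd _ _ cv]
    exact h1.1 _ _ (hWsub _ hvW) hNY
  have cw : g ≫ z = y ≫ g' := eg.symm
  obtain ⟨w, hwZ, hwY⟩ : ∃ w : Y ⟶ pullback z g',
      w ≫ pullback.fst z g' = g ∧ w ≫ pullback.snd z g' = y :=
    ⟨hQ.lift _ _ cw, hQ.lift_fst _ _ cw, hQ.lift_snd _ _ cw⟩
  have hw : WG w := h1.2.2 _ _ (hWsub _ hQW) (hwY ▸ hy)
  have cp : fst ≫ f = (snd ≫ w) ≫ pullback.fst z g' := by rw [Category.assoc, hwZ, hP.w]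
  have hPS : IsPullback snd (hS.lift _ _ cp) w sQ := by
    refine IsPullback.of_bot (v₁₁ := hS.lift _ _ cp) ?_ (hS.lift_snd _ _ cp).symm hS.flip
    rw [hS.lift_fst, hwZ]
    exact hP.flip
  have hw' := msG.weq_baseChange hS.flip hPS hw hQF (by rwa [hwZ])
  refine h1.2.2 snd w hw ?_
  rw [← hS.lift_snd _ _ cp]
  exact h1.1 _ _ hw' hsQ


/-- Theorem 1.5: the dual of Theorem 1.2, producing a right proper model structure. -/
theorem theorem_1_5 [HasFiniteLimits M] [HasFiniteColimits M]
    (W C F WG CG FG : MorphismProperty M)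
    (hMS : IsModelStructure W C F)
    (hWsub : ∀ ⦃X Y : M⦄ (f : X ⟶ Y), W f → WG f)
    (hCsub : ∀ ⦃X Y : M⦄ (f : X ⟶ Y), CG f → C f)
    (hFsub : ∀ ⦃X Y : M⦄ (f : X ⟶ Y), FG f → F f)
    (h1 : TwoOutOfThree WG)
    (h2W : ClosedUnderRetracts WG)
    (h2C : ClosedUnderRetracts CG)
    (h2F : ClosedUnderRetracts FG)
    (h3comp : ClosedUnderComposition FG)
    (h3pull : ClosedUnderPullbacks FG)
    (h4 : ∀ X : M, FG (terminal.from X) ↔ F (terminal.from X))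
    (h5 : ∀ X : M, F (terminal.from X) →
      ∃ (Path : M) (s : X ⟶ Path) (p : Path ⟶ X ⨯ X), WG s ∧ FG p ∧ s ≫ p = diag X)
    (h6 : ∀ ⦃P X Y Z : M⦄ (fst : P ⟶ X) (snd : P ⟶ Y) (f : X ⟶ Z) (g : Y ⟶ Z),
      IsPullback fst snd f g → W f → FG g →
      F (terminal.from Y) → F (terminal.from Z) → W snd)
    (h7 : ∀ ⦃A B X Y : M⦄ (i : A ⟶ B) (q : X ⟶ Y),
      CG i → FG q → WG q → HasLiftingProperty i q)
    (h8 : ∀ ⦃X Y : M⦄ (f : X ⟶ Y),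
      ∃ (Z : M) (i : X ⟶ Z) (q : Z ⟶ Y), CG i ∧ FG q ∧ WG q ∧ i ≫ q = f) :
    IsModelStructure WG CG FG ∧ RightProper WG FG := by
  have hid (X : M) : WG (𝟙 X) := hWsub _ (hMS.weq_id_s6 X)
  have hTF : ClosedUnderPullbacks (FG ⊓ WG) :=
    rlp_pullback (L := CG) (retracts_inf h2F h2W)
      (fun _ _ f => by
        obtain ⟨Z, i, q, hi, hq, hq', e⟩ := h8 f
        exact ⟨Z, i, q, hi, ⟨hq, hq'⟩, e⟩)
      (fun _ _ _ _ i q hi hq => h7 i q hi hq.1 hq.2)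
  have fact : ∀ ⦃X Y : M⦄ (f : X ⟶ Y),
      ∃ (Z : M) (i : X ⟶ Z) (p : Z ⟶ Y), CG i ∧ WG i ∧ FG p ∧ i ≫ p = f := by
    intro X Y f
    obtain ⟨T, i, q, hi, hq, e⟩ := exists_factorization hMS hWsub hFsub h1 h3pull h6
      (fun X Y f hX hY => by
        obtain ⟨Q, s, p, hs, hp, hsp⟩ := h5 Y hY
        exact mappingPath h1 hid h3comp h3pull hTF f ((h4 X).2 hX) ((h4 Y).2 hY) s p hs hp hsp) f
    obtain ⟨Z, j, r, hj, hrF, hrW, rfl⟩ := h8 i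
    exact ⟨Z, j, r ≫ q, hj, h1.2.2 j r hrW hi, h3comp _ _ hrF hq, by rw [← e, Category.assoc]⟩
  have msG : IsModelStructure WG CG FG := by
    refine ⟨h1, h2W, h2C, h2F, ?_, h7, h8, fact⟩
    intro A B X Y i p hiC hiW hp
    refine ⟨fun {a b} sq => ?_⟩
    have hPB := IsPullback.of_hasPullback p b
    obtain ⟨Z, j, q, -, hjW, hq, e⟩ := fact (pullback.lift a i sq.w)
    have hji : j ≫ q ≫ pullback.snd p b = i := by
      rw [← Category.assoc, e, pullback.lift_snd]
    have := h7 i (q ≫ pullback.snd p b) hiC (h3comp _ _ hq (h3pull _ _ _ _ hPB hp))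
      (h1.2.1 j _ hjW (hji ▸ hiW))
    have sq' : CommSq j i (q ≫ pullback.snd p b) (𝟙 B) := ⟨by rw [hji, Category.comp_id]⟩
    refine ⟨⟨⟨sq'.lift ≫ q ≫ pullback.fst p b, ?_, ?_⟩⟩⟩
    · rw [← Category.assoc, sq'.fac_left, ← Category.assoc, e, pullback.lift_fst]
    · have h := sq'.fac_right
      rw [Category.assoc, Category.assoc, pullback.condition, ← Category.assoc q,
        ← Category.assoc, h, Category.id_comp]
  exact ⟨msG, rightProper_of_sub hMS msG hWsub hFsub h4 h6⟩


end LLExt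
end

section
/- Let (W,C,F) be a model structure on a finitely bicomplete category M, and let W^G, C^G, F^G be classes of maps of M with W ⊆ W^G, C^G ⊆ C, and F ⊆ F^G. Assume: (1) W^G has the two-out-of-three property; (2) W^G, C^G and F^G are closed under retracts; (3) F^G is closed under composition and pullback; (4) every commutative square with left vertical map in C^G and right vertical map in F^G ∩ W^G admits a diagonal lift; (5) every map f factors as f = q∘i with i in C^G and q in F^G ∩ W^G; (6) the model structure (W,C,F) is right proper. Then (W^G, C^G, F^G) is a model structure on M. -/
/-!
The two axioms that are not hypotheses are the factorization into a map of `CG ∩ WG` followed by a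
map of `FG`, and the lifting of `CG ∩ WG` against `FG`.

Factorization (`exists_fact_trivCof_fib`): write `f = j ≫ p` with `j` a trivial cofibration and `p`
a fibration of the original structure, then `j = i ≫ q` with `i` in `CG` and `q` in `FG ∩ WG`. Since
`j` lies in `W ⊆ WG`, two-out-of-three puts `i` in `WG`, and `q ≫ p` is a composite of maps of `FG`.

Lifting (`hasLiftingProperty_of_fact`): a square from `i` to `p` induces a map from the domain of `i`
to the base change `P` of `p` along the bottom edge. Factoring that map through some `Z` gives a map
from `Z` to the codomain of `i` which lies in `FG ∩ WG`, so `i` lifts against it, and the lift yields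
a diagonal of the original square.
-/


open CategoryTheory CategoryTheory.Limits

universe v u v' u'

namespace LLExt

variable {M : Type u} [Category.{v} M]

/-- Refactoring the left factor of a (trivial cofibration, fibration) factorization gives the
corresponding factorization for the extended classes. -/
theorem exists_fact_trivCof_fib {W C F WG CG FG : MorphismProperty M}
    (hMS : IsModelStructure W C F)
    (hWsub : ∀ ⦃X Y : M⦄ (f : X ⟶ Y), W f → WG f)
    (hFsub : ∀ ⦃X Y : M⦄ (f : X ⟶ Y), F f → FG f)
    (h1 : TwoOutOfThree WG) (h3comp : ClosedUnderComposition FG)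
    (h5 : ∀ ⦃X Y : M⦄ (f : X ⟶ Y),
      ∃ (Z : M) (i : X ⟶ Z) (q : Z ⟶ Y), CG i ∧ FG q ∧ WG q ∧ i ≫ q = f)
    {X Y : M} (f : X ⟶ Y) :
    ∃ (Z : M) (i : X ⟶ Z) (p : Z ⟶ Y), CG i ∧ WG i ∧ FG p ∧ i ≫ p = f := by
  obtain ⟨E, j, p, -, hjW, hp, rfl⟩ := hMS.fact_trivCof_fib f
  obtain ⟨Z, i, q, hi, hq, hqW, rfl⟩ := h5 j
  exact ⟨Z, i, q ≫ p, hi, h1.2.2 i q hqW (hWsub _ hjW), h3comp q p hq (hFsub p hp),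
    (Category.assoc _ _ _).symm⟩

/-- Lifting of `CG ∩ WG` against `FG`, reduced to lifting of `CG` against `FG ∩ WG` by base change
and factorization. -/
theorem hasLiftingProperty_of_fact [HasFiniteLimits M] {WG CG FG : MorphismProperty M}
    (h1 : TwoOutOfThree WG) (h3comp : ClosedUnderComposition FG)
    (h3pull : ClosedUnderPullbacks FG)
    (h4 : ∀ ⦃A B X Y : M⦄ (i : A ⟶ B) (q : X ⟶ Y),
      CG i → FG q → WG q → HasLiftingProperty i q)
    (hfact : ∀ ⦃X Y : M⦄ (f : X ⟶ Y),
      ∃ (Z : M) (i : X ⟶ Z) (p : Z ⟶ Y), CG i ∧ WG i ∧ FG p ∧ i ≫ p = f)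
    {A B X Y : M} (i : A ⟶ B) (p : X ⟶ Y) (hi : CG i) (hiW : WG i) (hp : FG p) :
    HasLiftingProperty i p := by
  refine ⟨fun {a b} sq => ?_⟩
  obtain ⟨Z, j, q, -, hjW, hq, hjq⟩ := hfact (pullback.lift a i sq.w)
  let r : Z ⟶ B := q ≫ pullback.snd p b
  have hr : FG r := h3comp _ _ hq (h3pull _ _ _ _ (IsPullback.of_hasPullback p b) hp)
  have hjr : j ≫ r = i := by
    simp only [r, ← Category.assoc, hjq, pullback.lift_snd]
  have hrW : WG r := h1.2.1 j r hjW (by rwa [hjr])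
  have := h4 i r hi hr hrW
  have sq' : CommSq j i r (𝟙 B) := ⟨by rw [hjr, Category.comp_id]⟩
  have hlift : sq'.lift ≫ q ≫ pullback.snd p b = 𝟙 B := sq'.fac_right
  refine ⟨⟨⟨sq'.lift ≫ q ≫ pullback.fst p b, ?_, ?_⟩⟩⟩
  · rw [sq'.fac_left_assoc, ← Category.assoc, hjq, pullback.lift_fst]
  · simp only [Category.assoc, pullback.condition]
    rw [← Category.assoc q, ← Category.assoc, hlift, Category.id_comp]

/-- Theorem 1.7: existence of ℓm-extensions. -/
theorem theorem_1_7 [HasFiniteLimits M] [HasFiniteColimits M]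
    (W C F WG CG FG : MorphismProperty M)
    (hMS : IsModelStructure W C F)
    (hWsub : ∀ ⦃X Y : M⦄ (f : X ⟶ Y), W f → WG f)
    (hCsub : ∀ ⦃X Y : M⦄ (f : X ⟶ Y), CG f → C f)
    (hFsub : ∀ ⦃X Y : M⦄ (f : X ⟶ Y), F f → FG f)
    (h1 : TwoOutOfThree WG)
    (h2W : ClosedUnderRetracts WG)
    (h2C : ClosedUnderRetracts CG)
    (h2F : ClosedUnderRetracts FG)
    (h3comp : ClosedUnderComposition FG)
    (h3pull : ClosedUnderPullbacks FG)
    (h4 : ∀ ⦃A B X Y : M⦄ (i : A ⟶ B) (q : X ⟶ Y),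
      CG i → FG q → WG q → HasLiftingProperty i q)
    (h5 : ∀ ⦃X Y : M⦄ (f : X ⟶ Y),
      ∃ (Z : M) (i : X ⟶ Z) (q : Z ⟶ Y), CG i ∧ FG q ∧ WG q ∧ i ≫ q = f)
    (h6 : RightProper W F) :
    IsModelStructure WG CG FG := by
  have hfact : ∀ ⦃X Y : M⦄ (f : X ⟶ Y),
      ∃ (Z : M) (i : X ⟶ Z) (p : Z ⟶ Y), CG i ∧ WG i ∧ FG p ∧ i ≫ p = f :=
    fun _ _ f => exists_fact_trivCof_fib hMS hWsub hFsub h1 h3comp h5 f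
  exact
    { weq_twoOutOfThree := h1
      weq_retracts := h2W
      cof_retracts := h2C
      fib_retracts := h2F
      lift_trivCof_fib := fun _ _ _ _ i p hi hiW hp =>
        hasLiftingProperty_of_fact h1 h3comp h3pull h4 hfact i p hi hiW hp
      lift_cof_trivFib := h4
      fact_cof_trivFib := h5
      fact_trivCof_fib := hfact }

end LLExt
end

section
/- Let (W^G, C^G, F^G) be an ℓℓ-extension of a model structure (W,C,F) on a bicomplete category M. Then for every map f : X → Y in W^G between G-fibrant objects X and Y, there exist cofibrant objects X̃ and Ỹ, maps u : X̃ → X and v : Ỹ → Y in F ∩ W, and a map f̃ : X̃ → Ỹ with f∘u = v∘f̃; moreover f̃ is in W^G, and X̃ and Ỹ are both cofibrant and G-fibrant. -/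
/-! Since `CG ⊆ C`, a map in `F ∩ W` lifts on the right against all of `CG`, in particular against
`CG ∩ WG`. By the retract argument `FG` consists of all maps with the right lifting property against
`CG ∩ WG`, so any `u : X' ⟶ X` in `F ∩ W` with `X` `G`-fibrant has `X'` `G`-fibrant. Hence ordinary
cofibrant replacements (factorizations of `∅ ⟶ X` and `∅ ⟶ Y`) already work: `f'` is obtained by
lifting `∅ ⟶ X'` against `v`, and it is in `WG` by two-out-of-three, because `W ⊆ WG`. -/

open CategoryTheory CategoryTheory.Limits

universe v u v' u'

namespace LLExt

variable {M : Type u} [Category.{v} M]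

/-- The retract argument: a map with the right lifting property against all trivial cofibrations
is a retract of the fibration in its (trivial cofibration, fibration) factorization. -/
theorem IsModelStructure.fib_of_rlp {W C F : MorphismProperty M} (h : IsModelStructure W C F)
    {X Y : M} (p : X ⟶ Y)
    (hp : ∀ ⦃A B : M⦄ (i : A ⟶ B), C i → W i → HasLiftingProperty i p) : F p := by
  obtain ⟨Z, j, q, hjC, hjW, hq, hfac⟩ := h.fact_trivCof_fib p
  have := hp j hjC hjW
  have sq : CommSq (𝟙 X) j p q := ⟨by simp [hfac]⟩
  exact h.fib_retracts p q j sq.lift (𝟙 Y) (𝟙 Y) sq.fac_left (by simp) (by simp [hfac])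
    (by simp) hq

/-- If `u : X' ⟶ X` is a trivial fibration for `(W, C, F)` and `X` is `G`-fibrant, then
so is `X'`. -/
theorem gFibrant_of_trivFib [HasTerminal M] {W C F WG CG FG : MorphismProperty M}
    (hMS : IsModelStructure W C F) (hG : IsModelStructure WG CG FG)
    (hCsub : ∀ ⦃X Y : M⦄ (f : X ⟶ Y), CG f → C f)
    {X' X : M} (u : X' ⟶ X) (hF : F u) (hW : W u) (hX : FG (terminal.from X)) :
    FG (terminal.from X') := by
  refine hG.fib_of_rlp _ fun A B i hiC hiW => ?_
  have := hMS.lift_cof_trivFib i u (hCsub i hiC) hF hW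
  have := hG.lift_trivCof_fib i _ hiC hiW hX
  rw [← terminal.comp_from u]
  infer_instance

/-- Cofibrant replacement of a `G`-weak equivalence between `G`-fibrant objects
(as used in Proposition 2.1). -/
theorem llExtension_cofibrant_replacement
    [HasLimits M] [HasColimits M]
    (W C F WG CG FG : MorphismProperty M)
    (hMS : IsModelStructure W C F)
    (hG : IsModelStructure WG CG FG)
    (hWsub : ∀ ⦃X Y : M⦄ (f : X ⟶ Y), W f → WG f)
    (hCsub : ∀ ⦃X Y : M⦄ (f : X ⟶ Y), CG f → C f)
    (hFsub : ∀ ⦃X Y : M⦄ (f : X ⟶ Y), FG f → F f) :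
    ∀ ⦃X Y : M⦄ (f : X ⟶ Y), WG f →
      FG (terminal.from X) → FG (terminal.from Y) →
      ∃ (X' Y' : M) (u : X' ⟶ X) (v : Y' ⟶ Y) (f' : X' ⟶ Y'),
        C (initial.to X') ∧ C (initial.to Y') ∧
        F u ∧ W u ∧ F v ∧ W v ∧ u ≫ f = f' ≫ v ∧ WG f' ∧
        FG (terminal.from X') ∧ FG (terminal.from Y') := by
  intro X Y f hf hX hY
  obtain ⟨X', i, u, hi, huF, huW, -⟩ := hMS.fact_cof_trivFib (initial.to X)
  obtain ⟨Y', j, v, hj, hvF, hvW, -⟩ := hMS.fact_cof_trivFib (initial.to Y)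
  obtain rfl : i = initial.to X' := Subsingleton.elim _ _
  obtain rfl : j = initial.to Y' := Subsingleton.elim _ _
  have := hMS.lift_cof_trivFib _ v hi hvF hvW
  have sq : CommSq (initial.to Y') (initial.to X') v (u ≫ f) := ⟨Subsingleton.elim _ _⟩
  refine ⟨X', Y', u, v, sq.lift, hi, hj, huF, huW, hvF, hvW, sq.fac_right.symm, ?_,
    gFibrant_of_trivFib hMS hG hCsub u huF huW hX, gFibrant_of_trivFib hMS hG hCsub v hvF hvW hY⟩
  apply hG.weq_twoOutOfThree.2.2 _ v (hWsub v hvW)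
  rw [sq.fac_right]
  exact hG.weq_twoOutOfThree.1 u f (hWsub u huW) hf

end LLExt
end

section
/- Let (W^G, C^G, F^G) be an ℓℓ-extension of a model structure (W,C,F) on a bicomplete category M. Let f : A → B, g : A → C and h : B → C be maps with g = h∘f, where f is in C^G, g is in C and h is in W. Then g is in C^G. -/
/-!
Factor `h` in the original model structure as `q ≫ p` with `q` a cofibration and `p` a trivial
fibration; by two-out-of-three, `q` is a trivial cofibration. Since `FG ⊆ F`, such a `q` has the
left lifting property against all of `FG`, so `f ≫ q` is, like `f`, a cofibration of the extension.
As `g` is in `C`, it lifts against `p` in the square `(f ≫ q) ≫ p = g ≫ 𝟙`, and this lift exhibits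
`g` as a retract of `f ≫ q`; hence `g` is in `CG`.
-/

open CategoryTheory CategoryTheory.Limits

universe v u v' u'

namespace LLExt

variable {M : Type u} [Category.{v} M]

/-- The retract argument: in a model structure, a map with the left lifting property against all
trivial fibrations is a cofibration. -/
theorem IsModelStructure.cof_of_lift {W C F : MorphismProperty M} (hM : IsModelStructure W C F)
    {A B : M} (g : A ⟶ B)
    (hg : ∀ ⦃X Y : M⦄ (p : X ⟶ Y), F p → W p → HasLiftingProperty g p) : C g := by
  obtain ⟨Z, i, p, hi, hpF, hpW, rfl⟩ := hM.fact_cof_trivFib g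
  have := hg p hpF hpW
  have sq : CommSq i (i ≫ p) p (𝟙 B) := ⟨by simp⟩
  exact hM.cof_retracts (i ≫ p) i (𝟙 A) (𝟙 A) sq.lift p (by simp) sq.fac_right
    (by simp) (by simp) hi

/-- Proposition 2.6(2), first part. -/
theorem prop_2_6_2_first
    [HasLimits M] [HasColimits M]
    (W C F WG CG FG : MorphismProperty M)
    (hMS : IsModelStructure W C F)
    (hG : IsModelStructure WG CG FG)
    (hWsub : ∀ ⦃X Y : M⦄ (f : X ⟶ Y), W f → WG f)
    (hCsub : ∀ ⦃X Y : M⦄ (f : X ⟶ Y), CG f → C f)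
    (hFsub : ∀ ⦃X Y : M⦄ (f : X ⟶ Y), FG f → F f) :
    ∀ ⦃A B C' : M⦄ (f : A ⟶ B) (g : A ⟶ C') (h : B ⟶ C'),
      g = f ≫ h → CG f → C g → W h → CG g := by
  rintro A B C' f g h rfl hf hg hh
  obtain ⟨D, q, p, hqC, hpF, hpW, rfl⟩ := hMS.fact_cof_trivFib h
  have hqW : W q := hMS.weq_twoOutOfThree.2.2 q p hpW hh
  have hfq : CG (f ≫ q) := hG.cof_of_lift _ fun X Y t htF htW => by
    have := hG.lift_cof_trivFib f t hf htF htW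
    have := hMS.lift_trivCof_fib q t hqC hqW (hFsub t htF)
    infer_instance
  have := hMS.lift_cof_trivFib _ p hg hpF hpW
  have sq : CommSq (f ≫ q) (f ≫ q ≫ p) p (𝟙 C') := ⟨by simp⟩
  exact hG.cof_retracts _ (f ≫ q) (𝟙 A) (𝟙 A) sq.lift p (by simp) sq.fac_right
    (by simp) (by simp) hfq

end LLExt
end
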